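/- arXiv:1301.4206 — 3 statements merged into one kernel-verified Lean document; each statement's English description precedes it below -/
import Mathlib

section
/- Let G be a finite undirected multigraph and A an Abelian group. The Abelian group H(E,A) of all balanced functions from E to A is isomorphic to A^{con₃(G)−con(G)} × A₂^{|V|−con₃(G)}, where con₃(G) is the number of 3-edge-connected equivalence classes of vertices, con(G) is the number of connected components, and A₂ is the subgroup of elements a∈A with 2a=0. -/
open Finset

/-- A finite undirected multigraph: each edge `e : E` has an unordered pair of
endpoints `ends e : Sym2 V`.  Loops and parallel edges are allowed and the graph
need not be connected. -/
structure Multigraph (V E : Type*) where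
  ends : E → Sym2 V

namespace Multigraph

variable {V E : Type*}

/-- `G.IsChain x y p` : `p` is an alternating sequence `v₁,e₁,…,vₙ,eₙ` (encoded as a
list of vertex-edge pairs) which forms a walk from `x` to `y` (the final vertex `y`
is omitted, i.e. this is "truncated"). -/
def IsChain (G : Multigraph V E) : V → V → List (V × E) → Prop
  | x, y, [] => x = y
  | x, y, (v, e) :: rest => v = x ∧ ∃ w, G.ends e = s(x, w) ∧ G.IsChain w y rest

/-- A truncated trail (ttrail) from `x` to `y`: an alternating walk with no repeated
edges, final vertex omitted. -/
def IsTtrail (G : Multigraph V E) (x y : V) (p : List (V × E)) : Prop :=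
  G.IsChain x y p ∧ (p.map Prod.snd).Nodup

/-- A cycle: a closed ttrail with no repeated vertices. -/
def IsCycle (G : Multigraph V E) (x : V) (p : List (V × E)) : Prop :=
  G.IsTtrail x x p ∧ (p.map Prod.fst).Nodup

/-- Two ttrails are edge-disjoint if they have no common edges. -/
def EdgeDisjoint (p q : List (V × E)) : Prop :=
  ∀ e, e ∈ p.map Prod.snd → e ∉ q.map Prod.snd

/-- `k`-edge-connectivity: two distinct vertices are `k`-edge-connected if there are
`k` pairwise edge-disjoint ttrails between them; every vertex is `k`-edge-connected
to itself. -/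
def KConn (G : Multigraph V E) (k : ℕ) (v w : V) : Prop :=
  v = w ∨ ∃ p : Fin k → List (V × E),
    (∀ i, G.IsTtrail v w (p i)) ∧ ∀ i j, i ≠ j → EdgeDisjoint (p i) (p j)

/-- `conk G k` : the number of equivalence classes of `k`-edge-connected vertices. -/
noncomputable def conk (G : Multigraph V E) (k : ℕ) : ℕ :=
  Nat.card (Quotient (Relation.EqvGen.setoid (G.KConn k)))

/-- The number of connected components of `G`. -/
noncomputable def con (G : Multigraph V E) : ℕ := G.conk 1

section Homology

variable [Fintype V] [Fintype E] [DecidableEq V] [DecidableEq E]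

/-- The vector in `F₂^V` which is the sum of the two endpoints of the edge `e`
(so a loop is sent to `0`). -/
def edgeVec (G : Multigraph V E) (e : E) : V → ZMod 2 := fun v =>
  Sym2.lift ⟨fun a b => (if v = a then (1 : ZMod 2) else 0) + (if v = b then 1 else 0),
    fun _ _ => add_comm _ _⟩ (G.ends e)

/-- The boundary map `δ : F₂^E → F₂^V`, sending each edge to the sum of its two
adjacent vertices. -/
def boundary (G : Multigraph V E) : (E → ZMod 2) →ₗ[ZMod 2] (V → ZMod 2) where
  toFun c := fun v => ∑ e, c e * G.edgeVec e v
  map_add' c d := by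
    funext v
    simp [add_mul, Finset.sum_add_distrib]
  map_smul' r c := by
    funext v
    simp [Finset.mul_sum, mul_assoc]

/-- The Cycle Space of `G` : the kernel of the boundary map. -/
def cycleSpace (G : Multigraph V E) : Submodule (ZMod 2) (E → ZMod 2) :=
  LinearMap.ker G.boundary

/-- The indicator vector of a vertex in `F₂^V`. -/
def vert (v : V) : V → ZMod 2 := fun w => if w = v then 1 else 0

/-- A `k`-weak homological cycle: a homological path between two `k`-edge-connected
vertices. -/
def IsWeakCycle (G : Multigraph V E) (k : ℕ) (c : E → ZMod 2) : Prop :=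
  ∃ v w, G.KConn k v w ∧ G.boundary c = vert v + vert w

/-- The `k`-Weak Cycle Space: the span of all `k`-weak homological cycles. -/
def weakCycleSpace (G : Multigraph V E) (k : ℕ) : Submodule (ZMod 2) (E → ZMod 2) :=
  Submodule.span (ZMod 2) {c | G.IsWeakCycle k c}

/-- `eps p` : the set of edges of the ttrail `p`, as a vector in `F₂^E`. -/
def eps (p : List (V × E)) : E → ZMod 2 := fun e => if e ∈ p.map Prod.snd then 1 else 0

/-- The `F₂`-linear extension of `f : E → A` to subsets of `E`: the sum of `f` over
the edges of the subset `S`. -/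
def fSum {A : Type*} [AddCommGroup A] (f : E → A) (S : E → ZMod 2) : A :=
  ∑ e ∈ Finset.univ.filter fun e => S e = 1, f e

end Homology

section Balanced

variable {A : Type*} [AddCommGroup A]

/-- The sum `g(v₁)+f(e₁)+…+g(vₙ)+f(eₙ)` of the values of a vertex-function `g` and an
edge-function `f` along a ttrail `v₁,e₁,…,vₙ,eₙ`. -/
def pathSum (g : V → A) (f : E → A) (p : List (V × E)) : A :=
  (p.map fun ve => g ve.1 + f ve.2).sum

/-- The sum `h(v₁)+h(e₁)+…+h(vₙ)+h(eₙ)` of the values of `h : V ∪ E → A` along a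
ttrail `v₁,e₁,…,vₙ,eₙ`. -/
def wSum (h : V ⊕ E → A) (p : List (V × E)) : A :=
  (p.map fun ve => h (Sum.inl ve.1) + h (Sum.inr ve.2)).sum

lemma pathSum_cons (g : V → A) (f : E → A) (a : V × E) (t : List (V × E)) :
    pathSum g f (a :: t) = (g a.1 + f a.2) + pathSum g f t := by
  simp [pathSum]

lemma pathSum_zero (p : List (V × E)) : pathSum (0 : V → A) (0 : E → A) p = 0 := by
  induction p with
  | nil => simp [pathSum]
  | cons a t ih => simp [pathSum_cons, ih]

lemma pathSum_add (g g' : V → A) (f f' : E → A) (p : List (V × E)) :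
    pathSum (g + g') (f + f') p = pathSum g f p + pathSum g' f' p := by
  induction p with
  | nil => simp [pathSum]
  | cons a t ih => simp only [pathSum_cons, Pi.add_apply, ih]; abel

lemma pathSum_neg (g : V → A) (f : E → A) (p : List (V × E)) :
    pathSum (-g) (-f) p = -pathSum g f p := by
  induction p with
  | nil => simp [pathSum]
  | cons a t ih => simp only [pathSum_cons, Pi.neg_apply, ih]; abel

lemma wSum_cons (h : V ⊕ E → A) (a : V × E) (t : List (V × E)) :
    wSum h (a :: t) = (h (Sum.inl a.1) + h (Sum.inr a.2)) + wSum h t := by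
  simp [wSum]

lemma wSum_zero (p : List (V × E)) : wSum (0 : V ⊕ E → A) p = 0 := by
  induction p with
  | nil => simp [wSum]
  | cons a t ih => simp [wSum_cons, ih]

lemma wSum_add (h h' : V ⊕ E → A) (p : List (V × E)) :
    wSum (h + h') p = wSum h p + wSum h' p := by
  induction p with
  | nil => simp [wSum]
  | cons a t ih => simp only [wSum_cons, Pi.add_apply, ih]; abel

lemma wSum_neg (h : V ⊕ E → A) (p : List (V × E)) :
    wSum (-h) p = -wSum h p := by
  induction p with
  | nil => simp [wSum]
  | cons a t ih => simp only [wSum_cons, Pi.neg_apply, ih]; abel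

/-- A function `f : E → A` is balanced if the sum of its values along every closed
ttrail of `G` is zero. -/
def BalancedE (G : Multigraph V E) (f : E → A) : Prop :=
  ∀ x p, G.IsTtrail x x p → pathSum (0 : V → A) f p = 0

/-- A function `g : V → A` is balanceable if some `f : E → A` balances it, i.e. the
sum of the values of `g` and `f` along every closed ttrail of `G` is zero. -/
def Balanceable (G : Multigraph V E) (g : V → A) : Prop :=
  ∃ f : E → A, ∀ x p, G.IsTtrail x x p → pathSum g f p = 0

/-- A function `h : V ∪ E → A` is balanced if the sum of its values along every
closed ttrail of `G` is zero. -/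
def BalancedW (G : Multigraph V E) (h : V ⊕ E → A) : Prop :=
  ∀ x p, G.IsTtrail x x p → wSum h p = 0

/-- `H(E,A)` : the group of balanced functions from `E` to `A`. -/
def Hgroup (G : Multigraph V E) (A : Type*) [AddCommGroup A] : AddSubgroup (E → A) where
  carrier := {f | G.BalancedE f}
  zero_mem' := fun _ p _ => pathSum_zero p
  add_mem' := by
    intro f f' hf hf' x p hp
    have h := pathSum_add (0 : V → A) 0 f f' p
    rw [add_zero] at h
    rw [h, hf x p hp, hf' x p hp, add_zero]
  neg_mem' := by
    intro f hf x p hp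
    have h := pathSum_neg (0 : V → A) f p
    rw [neg_zero] at h
    rw [h, hf x p hp, neg_zero]

/-- `B(V,A)` : the group of balanceable functions from `V` to `A`. -/
def Bgroup (G : Multigraph V E) (A : Type*) [AddCommGroup A] : AddSubgroup (V → A) where
  carrier := {g | G.Balanceable g}
  zero_mem' := ⟨0, fun _ p _ => pathSum_zero p⟩
  add_mem' := by
    rintro g g' ⟨f, hf⟩ ⟨f', hf'⟩
    exact ⟨f + f', fun x p hp => by rw [pathSum_add, hf x p hp, hf' x p hp, add_zero]⟩
  neg_mem' := by
    rintro g ⟨f, hf⟩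
    exact ⟨-f, fun x p hp => by rw [pathSum_neg, hf x p hp, neg_zero]⟩

/-- `W(V ∪ E, A)` : the group of balanced functions from `V ∪ E` to `A`. -/
def Wgroup (G : Multigraph V E) (A : Type*) [AddCommGroup A] : AddSubgroup (V ⊕ E → A) where
  carrier := {h | G.BalancedW h}
  zero_mem' := fun _ p _ => wSum_zero p
  add_mem' := by
    intro h h' hh hh' x p hp
    rw [wSum_add, hh x p hp, hh' x p hp, add_zero]
  neg_mem' := by
    intro h hh x p hp
    rw [wSum_neg, hh x p hp, neg_zero]

end Balanced

/-- A `3`-weakly closed ttrail (a ttrail between `3`-edge-connected vertices) which is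
short: no inner vertex is `3`-edge-connected to the initial vertex. -/
def ShortW (G : Multigraph V E) (x y : V) (p : List (V × E)) : Prop :=
  G.IsTtrail x y p ∧ G.KConn 3 x y ∧ ∀ v ∈ (p.map Prod.fst).tail, ¬ G.KConn 3 v x

/-- `G.ShortChain x y L` : `L` is a list of nontrivial short `3`-weakly closed ttrails
which concatenate into a ttrail from `x` to `y`. -/
def ShortChain (G : Multigraph V E) : V → V → List (List (V × E)) → Prop
  | x, y, [] => x = y
  | x, y, s :: rest => s ≠ [] ∧ ∃ z, G.ShortW x z s ∧ G.ShortChain z y rest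

/-- `A₂` : the subgroup of elements of order dividing `2` in `A`. -/
def torsion2 (A : Type*) [AddCommGroup A] : AddSubgroup A where
  carrier := {a | 2 • a = 0}
  zero_mem' := by simp
  add_mem' := by
    intro a b ha hb
    simp only [Set.mem_setOf_eq] at *
    rw [smul_add, ha, hb, add_zero]
  neg_mem' := by
    intro a ha
    simp only [Set.mem_setOf_eq] at *
    rw [smul_neg, ha, neg_zero]

/-- `2A` : the image of the doubling map `a ↦ 2a`. -/
def double2 (A : Type*) [AddCommGroup A] : AddSubgroup A where
  carrier := {b | ∃ a, b = 2 • a}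
  zero_mem' := ⟨0, by simp⟩
  add_mem' := by
    rintro a b ⟨x, rfl⟩ ⟨y, rfl⟩
    exact ⟨x + y, by rw [smul_add]⟩
  neg_mem' := by
    rintro a ⟨x, rfl⟩
    exact ⟨-x, by rw [smul_neg]⟩

end Multigraph

namespace Multigraph

variable {V E : Type*} [Fintype V] [Fintype E] [DecidableEq V] [DecidableEq E]

/-!
Identify vertex sets and edge sets with vectors over `F₂`. By Menger's theorem two vertices are
`3`-edge-connected iff no cut with at most two edges separates them, and by submodularity of cuts
the vertex sets with such cuts span a ring `B` of subsets; its dimension is the number `con₃(G)` of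
its atoms, and its coboundary has dimension `con₃(G) - con(G)`. The edge sets orthogonal to that
coboundary are the `3`-weak cycles. They form a ring `W` of codimension `con₃(G) - con(G)`, because
two edge sets meeting a cut with at most two edges evenly have an intersection that does so too.

A function `f` is balanced iff it sums to zero over every cycle. Every atom of `W` is the
intersection of two cycles `c` and `d`: given an edge `e` of the atom, delete `e`, double the other
edges of the atom, and apply Menger's theorem to the ends of `e`. Summing a balanced `f` over `c`,
`d` and `c + d` shows that twice its sum over `c ∩ d` vanishes. Hence summation of `f` is a linear
map from `W` to `A₂`; as it kills the cycles, it factors through the boundary, so on `W` it agrees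
with summation of the coboundary of some `g : V → A₂`. This `g` is unique once it is required to
vanish at one vertex of each `3`-edge-connected class, which leaves `A₂ ^ (|V| - con₃(G))`. What
remains of `f` sums to zero over every atom of `W`, and such functions are determined by arbitrary
values on all edges but one from each atom, that is, by an element of `A ^ (con₃(G) - con(G))`.
-/

/-! ### Coboundaries, flows and Menger's theorem -/

section Coboundary

variable {V E M : Type*} [AddCommGroup M] [Module (ZMod 2) M] (G : Multigraph V E)

/-- The coboundary of a vertex function with values in an `F₂`-module: the value on an edge is the
sum (equivalently, the difference) of the values at the two ends. -/
def coboundary : (V → M) →ₗ[ZMod 2] (E → M) where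
  toFun g e := Sym2.lift ⟨fun a b => g a + g b, fun _ _ => add_comm _ _⟩ (G.ends e)
  map_add' g g' := by
    ext e
    cases h : G.ends e
    simp only [h, Pi.add_apply, Sym2.lift_mk]
    abel
  map_smul' r g := by
    ext e
    cases h : G.ends e
    simp [h, smul_add]

variable {G}

lemma coboundary_apply (g : V → M) {e : E} {a b : V} (h : G.ends e = s(a, b)) :
    G.coboundary g e = g a + g b := by
  simp [coboundary, h]

variable (G)

/-- The edges of the cut whose sides are `{v | h v = 0}` and `{v | h v = 1}`. -/
def cutEdges [Fintype E] (h : V → ZMod 2) : Finset E := {e | G.coboundary h e = 1}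

variable {G}

lemma mem_cutEdges [Fintype E] {h : V → ZMod 2} {e : E} :
    e ∈ G.cutEdges h ↔ G.coboundary h e = 1 := by
  simp [cutEdges]

lemma mem_cutEdges_iff_ne [Fintype E] {h : V → ZMod 2} {e : E} {a b : V}
    (hends : G.ends e = s(a, b)) : e ∈ G.cutEdges h ↔ h a ≠ h b := by
  rw [mem_cutEdges, coboundary_apply h hends]
  generalize h a = i, h b = j
  revert i j
  decide

end Coboundary

section Darts

variable {V E : Type*} (G : Multigraph V E)

/-- The initial vertex of the dart `(e, b)`, that is, of the edge `e` traversed in one of its two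
directions. The Boolean compares this direction with an arbitrary fixed orientation of `e`. -/
noncomputable def tail (d : E × Bool) : V :=
  if d.2 then (Quot.out (G.ends d.1)).1 else (Quot.out (G.ends d.1)).2

/-- The final vertex of a dart, that is, the initial vertex of the reversed dart. -/
noncomputable def head (d : E × Bool) : V := G.tail (d.1, !d.2)

lemma ends_eq_tail_head (d : E × Bool) : G.ends d.1 = s(G.tail d, G.head d) := by
  obtain ⟨e, b⟩ := d
  have h : s((Quot.out (G.ends e)).1, (Quot.out (G.ends e)).2) = G.ends e :=
    Quot.out_eq (G.ends e)
  cases b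
  · exact h.symm.trans Sym2.eq_swap
  · exact h.symm

/-- `G.IsDartChain x y p` says that consecutive darts of `p` fit together to a walk from `x`
to `y`. -/
def IsDartChain (G : Multigraph V E) : V → V → List (E × Bool) → Prop
  | x, y, [] => x = y
  | x, y, d :: p => G.tail d = x ∧ G.IsDartChain (G.head d) y p

variable {G} {x y v : V} {p : List (E × Bool)} {d : E × Bool} {D : Set (E × Bool)}

lemma IsDartChain.isChain (h : G.IsDartChain x y p) :
    G.IsChain x y (p.map fun d => (G.tail d, d.1)) := by
  induction p generalizing x with
  | nil => exact h
  | cons d p ih => exact ⟨h.1, G.head d, h.1 ▸ G.ends_eq_tail_head d, ih h.2⟩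

lemma IsDartChain.isTtrail (h : G.IsDartChain x y p) (hp : (p.map Prod.fst).Nodup) :
    G.IsTtrail x y (p.map fun d => (G.tail d, d.1)) :=
  ⟨h.isChain, by simpa [List.map_map, Function.comp_def] using hp⟩

lemma IsDartChain.exists_suffix (h : G.IsDartChain x y p) (hd : d ∈ p) (hv : v ∈ G.ends d.1) :
    ∃ q, q <:+ p ∧ G.IsDartChain v y q := by
  induction p generalizing x with
  | nil => simp at hd
  | cons d' p ih =>
    rcases List.mem_cons.1 hd with rfl | hd
    · rw [ends_eq_tail_head, Sym2.mem_iff] at hv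
      rcases hv with rfl | rfl
      · exact ⟨d :: p, List.suffix_rfl, rfl, h.2⟩
      · exact ⟨p, List.suffix_cons d p, h.2⟩
    · obtain ⟨q, hq, hc⟩ := ih h.2 hd
      exact ⟨q, hq.trans (List.suffix_cons d' p), hc⟩

variable (G D) in
/-- One can go from `u` to `w` along a single dart of `D`. -/
def DartStep (u w : V) : Prop := ∃ d ∈ D, G.tail d = u ∧ G.head d = w

lemma exists_dartTrail (h : Relation.ReflTransGen (G.DartStep D) x y) :
    ∃ p, G.IsDartChain x y p ∧ (p.map Prod.fst).Nodup ∧ ∀ d ∈ p, d ∈ D := by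
  induction h using Relation.ReflTransGen.head_induction_on with
  | refl => exact ⟨[], rfl, List.nodup_nil, by simp⟩
  | head hstep _ ih =>
    obtain ⟨d, hdD, rfl, rfl⟩ := hstep
    obtain ⟨p, hp, hnodup, hpD⟩ := ih
    by_cases hd : d.1 ∈ p.map Prod.fst
    · obtain ⟨d', hd', hdd'⟩ := List.mem_map.1 hd
      have hv : G.tail d ∈ G.ends d'.1 := by simp [hdd', ends_eq_tail_head]
      obtain ⟨q, hq, hc⟩ := hp.exists_suffix hd' hv
      exact ⟨q, hc, hnodup.sublist (hq.sublist.map _), fun d hd => hpD d (hq.subset hd)⟩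
    · exact ⟨d :: p, ⟨rfl, hp⟩, List.nodup_cons.2 ⟨hd, hnodup⟩, List.forall_mem_cons.2 ⟨hdD, hpD⟩⟩

open scoped Classical in
lemma cutEdges_indicator_subset [Fintype E] (S : Set V) :
    G.cutEdges (S.indicator 1) ⊆
      ({d : E × Bool | G.tail d ∈ S ∧ G.head d ∉ S} : Finset (E × Bool)).image Prod.fst := by
  intro e he
  rw [mem_cutEdges_iff_ne (G.ends_eq_tail_head (e, true))] at he
  simp only [Finset.mem_image, Finset.mem_filter, Finset.mem_univ, true_and]
  by_cases ht : G.tail (e, true) ∈ S <;> by_cases hh : G.head (e, true) ∈ S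
  · simp [ht, hh] at he
  · exact ⟨(e, true), ⟨ht, hh⟩, rfl⟩
  · exact ⟨(e, false), ⟨hh, ht⟩, rfl⟩
  · simp [ht, hh] at he

end Darts

section Flows

variable {V E : Type*}

/-- The sign of the dart `(e, b)` relative to the orientation of `e` given by the dart
`(e, true)`. -/
def dartSign (b : Bool) : ℤ := if b then 1 else -1

/-- The darts that carry one unit of the flow `φ` in their own direction. -/
def flowDarts (φ : E → ℤ) : Set (E × Bool) := {d | dartSign d.2 * φ d.1 = 1}

section DartFlow

variable [DecidableEq E] {p : List (E × Bool)}

/-- One unit of flow sent along the darts of `p`. -/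
def dartFlow (p : List (E × Bool)) : E → ℤ :=
  (p.map fun d => Pi.single d.1 (dartSign d.2)).sum

lemma dartFlow_cons (d : E × Bool) (p : List (E × Bool)) :
    dartFlow (d :: p) = Pi.single d.1 (dartSign d.2) + dartFlow p := by
  simp [dartFlow]

lemma dartFlow_of_notMem {e : E} (he : e ∉ p.map Prod.fst) : dartFlow p e = 0 := by
  induction p with
  | nil => rfl
  | cons d p ih =>
    simp only [List.map_cons, List.mem_cons, not_or] at he
    rw [dartFlow_cons, Pi.add_apply, Pi.single_eq_of_ne he.1, ih he.2, add_zero]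

lemma dartFlow_of_mem (hp : (p.map Prod.fst).Nodup) {d : E × Bool} (hd : d ∈ p) :
    dartFlow p d.1 = dartSign d.2 := by
  induction p with
  | nil => simp at hd
  | cons d' p ih =>
    simp only [List.map_cons, List.nodup_cons] at hp
    rw [dartFlow_cons, Pi.add_apply]
    rcases List.mem_cons.1 hd with rfl | hd
    · rw [Pi.single_eq_same, dartFlow_of_notMem hp.1, add_zero]
    · have hne : d.1 ≠ d'.1 := fun h => hp.1 (h ▸ List.mem_map_of_mem hd)
      rw [Pi.single_eq_of_ne hne, ih hp.2 hd, zero_add]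

lemma sub_dartFlow_apply_of_mem {φ : E → ℤ} (hnodup : (p.map Prod.fst).Nodup)
    (hflow : ∀ d ∈ p, d ∈ flowDarts φ) {e : E} (he : e ∈ p.map Prod.fst) :
    (φ - dartFlow p) e = 0 := by
  obtain ⟨d, hd, rfl⟩ := List.mem_map.1 he
  have hd' : dartSign d.2 * φ d.1 = 1 := hflow d hd
  rw [Pi.sub_apply, dartFlow_of_mem hnodup hd]
  unfold dartSign at hd' ⊢
  split_ifs at hd' ⊢ <;> omega

end DartFlow

variable [Fintype E] [DecidableEq V] (G : Multigraph V E)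

/-- The net outflow at each vertex of an integral flow on the edges, every edge `e` being oriented
along the dart `(e, true)`. -/
noncomputable def divergence : (E → ℤ) →ₗ[ℤ] (V → ℤ) :=
  Fintype.linearCombination ℤ fun e =>
    Pi.single (G.tail (e, true)) 1 - Pi.single (G.head (e, true)) 1

/-- `φ` is a flow of value `k` from `x` to `y` in which every edge has capacity `1`. -/
structure IsUnitFlow (x y : V) (k : ℕ) (φ : E → ℤ) : Prop where
  abs_le_one : ∀ e, |φ e| ≤ 1
  divergence_eq : G.divergence φ = (k : ℤ) • (Pi.single x 1 - Pi.single y 1)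

variable {G} {x y : V} {k : ℕ} {φ : E → ℤ}

section Cut

lemma dotProduct_divergence [Fintype V] (h : V → ℤ) (φ : E → ℤ) :
    h ⬝ᵥ G.divergence φ = ∑ e, φ e * (h (G.tail (e, true)) - h (G.head (e, true))) := by
  rw [divergence, Fintype.linearCombination_apply, dotProduct_sum]
  refine Finset.sum_congr rfl fun e _ => ?_
  rw [dotProduct_smul, dotProduct_sub, dotProduct_single_one, dotProduct_single_one, smul_eq_mul]

variable [Finite V]

open scoped Classical in
lemma IsUnitFlow.value_eq_sum_leaving {S : Set V} (hφ : G.IsUnitFlow x y k φ) (hx : x ∈ S)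
    (hy : y ∉ S) :
    (k : ℤ) = ∑ d : E × Bool with G.tail d ∈ S ∧ G.head d ∉ S, dartSign d.2 * φ d.1 := by
  cases nonempty_fintype V
  have hk : S.indicator 1 ⬝ᵥ G.divergence φ = (k : ℤ) := by
    rw [hφ.divergence_eq, dotProduct_smul, dotProduct_sub, dotProduct_single_one,
      dotProduct_single_one]
    simp [hx, hy]
  rw [← hk, dotProduct_divergence, Finset.sum_filter, Fintype.sum_prod_type]
  refine Finset.sum_congr rfl fun e _ => ?_
  by_cases ht : G.tail (e, true) ∈ S <;> by_cases hh : G.tail (e, false) ∈ S <;>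
    simp [ht, hh, head, dartSign]

lemma IsUnitFlow.reachable_flowDarts (hφ : G.IsUnitFlow x y k φ) (hk : k ≠ 0) :
    Relation.ReflTransGen (G.DartStep (flowDarts φ)) x y := by
  classical
  by_contra hy
  have hvalue := hφ.value_eq_sum_leaving
    (S := {v | Relation.ReflTransGen (G.DartStep (flowDarts φ)) x v}) .refl hy
  refine hk (Nat.cast_nonpos.1 (hvalue.trans_le (Finset.sum_nonpos fun d hd => ?_)))
  obtain ⟨ht, hh⟩ := (Finset.mem_filter.1 hd).2
  have hd : dartSign d.2 * φ d.1 ≠ 1 := fun h => hh (ht.tail ⟨d, h, rfl, rfl⟩)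
  have := abs_le.1 (hφ.abs_le_one d.1)
  unfold dartSign at hd ⊢
  split_ifs at hd ⊢ <;> omega

lemma IsUnitFlow.exists_card_cutEdges_le (hφ : G.IsUnitFlow x y k φ)
    (hy : ¬ Relation.ReflTransGen (G.DartStep (flowDarts φ)ᶜ) x y) :
    ∃ h : V → ZMod 2, h x ≠ h y ∧ #(G.cutEdges h) ≤ k := by
  classical
  set S := {v | Relation.ReflTransGen (G.DartStep (flowDarts φ)ᶜ) x v}
  have hx : x ∈ S := .refl
  have hflow : ∀ d, G.tail d ∈ S ∧ G.head d ∉ S → dartSign d.2 * φ d.1 = 1 := fun d hd =>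
    by_contra fun h => hd.2 (hd.1.tail ⟨d, h, rfl, rfl⟩)
  refine ⟨S.indicator 1, ?_, ?_⟩
  · rw [Set.indicator_of_mem hx, Set.indicator_of_notMem (show y ∉ S from hy)]
    exact one_ne_zero
  · zify
    rw [hφ.value_eq_sum_leaving hx hy, Finset.sum_congr rfl fun d hd =>
      hflow d (Finset.mem_filter.1 hd).2, Finset.sum_const, nsmul_one]
    exact_mod_cast (Finset.card_le_card (cutEdges_indicator_subset S)).trans Finset.card_image_le

end Cut

section Augmentation

variable [DecidableEq E] {p : List (E × Bool)}

lemma divergence_single (d : E × Bool) :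
    G.divergence (Pi.single d.1 (dartSign d.2)) =
      Pi.single (G.tail d) 1 - Pi.single (G.head d) 1 := by
  rw [divergence, Fintype.linearCombination_apply_single]
  obtain ⟨e, _ | _⟩ := d <;> simp [dartSign, head]

lemma IsDartChain.divergence_dartFlow (h : G.IsDartChain x y p) :
    G.divergence (dartFlow p) = Pi.single x 1 - Pi.single y 1 := by
  induction p generalizing x with
  | nil => simp [dartFlow, show x = y from h]
  | cons d p ih =>
    obtain ⟨rfl, h⟩ := h
    rw [dartFlow_cons, map_add, divergence_single, ih h, sub_add_sub_cancel]

lemma IsUnitFlow.add_dartFlow (hφ : G.IsUnitFlow x y k φ) (hp : G.IsDartChain x y p)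
    (hnodup : (p.map Prod.fst).Nodup) (hres : ∀ d ∈ p, d ∉ flowDarts φ) :
    G.IsUnitFlow x y (k + 1) (φ + dartFlow p) where
  abs_le_one e := by
    rw [Pi.add_apply]
    have hφe := hφ.abs_le_one e
    by_cases he : e ∈ p.map Prod.fst
    · obtain ⟨d, hd, rfl⟩ := List.mem_map.1 he
      have hd' : dartSign d.2 * φ d.1 ≠ 1 := hres d hd
      rw [dartFlow_of_mem hnodup hd]
      rw [abs_le] at hφe ⊢
      unfold dartSign at hd' ⊢
      split_ifs at hd' ⊢ <;> omega
    · rwa [dartFlow_of_notMem he, add_zero]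
  divergence_eq := by
    rw [map_add, hφ.divergence_eq, hp.divergence_dartFlow, Nat.cast_succ, add_smul, one_smul]

lemma IsUnitFlow.sub_dartFlow (hφ : G.IsUnitFlow x y (k + 1) φ) (hp : G.IsDartChain x y p)
    (hnodup : (p.map Prod.fst).Nodup) (hflow : ∀ d ∈ p, d ∈ flowDarts φ) :
    G.IsUnitFlow x y k (φ - dartFlow p) where
  abs_le_one e := by
    by_cases he : e ∈ p.map Prod.fst
    · simp [sub_dartFlow_apply_of_mem hnodup hflow he]
    · simpa [dartFlow_of_notMem he] using hφ.abs_le_one e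
  divergence_eq := by
    rw [map_sub, hφ.divergence_eq, hp.divergence_dartFlow, Nat.cast_succ, add_smul, one_smul,
      add_sub_cancel_right]

end Augmentation

variable [Finite V]

lemma IsUnitFlow.exists_edgeDisjoint_ttrails (hφ : G.IsUnitFlow x y k φ) :
    ∃ p : Fin k → List (V × E), (∀ i, G.IsTtrail x y (p i)) ∧
      (∀ i j, i ≠ j → EdgeDisjoint (p i) (p j)) ∧ ∀ i, ∀ e ∈ (p i).map Prod.snd, φ e ≠ 0 := by
  classical
  induction k generalizing φ with
  | zero => exact ⟨nofun, nofun, nofun, nofun⟩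
  | succ k ih =>
    obtain ⟨q, hq, hnodup, hflow⟩ := exists_dartTrail (hφ.reachable_flowDarts k.succ_ne_zero)
    obtain ⟨p, htrail, hdisj, hsupp⟩ := ih (hφ.sub_dartFlow hq hnodup hflow)
    have hq_zero : ∀ e ∈ (q.map fun d => (G.tail d, d.1)).map Prod.snd, (φ - dartFlow q) e = 0 :=
      fun e he => sub_dartFlow_apply_of_mem hnodup hflow (by simpa using he)
    refine ⟨Fin.cons (q.map fun d => (G.tail d, d.1)) p, ?_, ?_, ?_⟩
    · exact Fin.cases (hq.isTtrail hnodup) htrail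
    · refine Fin.cases (Fin.cases (fun h => absurd rfl h) fun j _ e he he' =>
        hsupp j e he' (hq_zero e he)) fun i => Fin.cases (fun _ e he he' =>
        hsupp i e he (hq_zero e he')) fun j hij => hdisj i j fun h => hij (h ▸ rfl)
    · refine Fin.cases (fun e he h0 => ?_) fun i e he h0 => ?_
      · obtain ⟨d, hd, rfl⟩ := List.mem_map.1 (show e ∈ q.map Prod.fst by simpa using he)
        have hd : dartSign d.2 * φ d.1 = 1 := hflow d hd
        simp [h0] at hd
      · have hq : e ∉ q.map Prod.fst := fun hq => hsupp i e he (hq_zero e (by simpa using hq))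
        exact hsupp i e he (by rw [Pi.sub_apply, h0, dartFlow_of_notMem hq, sub_zero])

lemma exists_isUnitFlow (hcut : ∀ h : V → ZMod 2, h x ≠ h y → k ≤ #(G.cutEdges h)) :
    ∃ φ, G.IsUnitFlow x y k φ := by
  classical
  induction k with
  | zero => exact ⟨0, by simp, by simp⟩
  | succ k ih =>
    obtain ⟨φ, hφ⟩ := ih fun h hxy => (Nat.le_succ k).trans (hcut h hxy)
    by_cases hy : Relation.ReflTransGen (G.DartStep (flowDarts φ)ᶜ) x y
    · obtain ⟨p, hp, hnodup, hres⟩ := exists_dartTrail hy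
      exact ⟨_, hφ.add_dartFlow hp hnodup hres⟩
    · obtain ⟨h, hxy, hle⟩ := hφ.exists_card_cutEdges_le hy
      exact absurd (hcut h hxy) (by omega)

end Flows

section Menger

variable {V E : Type*} [Fintype E] {G : Multigraph V E} {x y : V} {k : ℕ}

lemma IsChain.exists_mem_cutEdges {p : List (V × E)} {h : V → ZMod 2} (hp : G.IsChain x y p)
    (hxy : h x ≠ h y) : ∃ e ∈ p.map Prod.snd, e ∈ G.cutEdges h := by
  induction p generalizing x with
  | nil => exact absurd (congrArg h hp) hxy
  | cons ve p ih =>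
    obtain ⟨-, w, hends, hp⟩ := hp
    by_cases hxw : h x = h w
    · obtain ⟨e, he, hcut⟩ := ih hp (hxw ▸ hxy)
      exact ⟨e, List.mem_cons_of_mem _ he, hcut⟩
    · exact ⟨ve.2, List.mem_cons_self, (mem_cutEdges_iff_ne hends).2 hxw⟩

lemma le_card_cutEdges {p : Fin k → List (V × E)} (hp : ∀ i, G.IsTtrail x y (p i))
    (hdisj : ∀ i j, i ≠ j → EdgeDisjoint (p i) (p j)) {h : V → ZMod 2} (hxy : h x ≠ h y) :
    k ≤ #(G.cutEdges h) := by
  choose e he hcut using fun i => (hp i).1.exists_mem_cutEdges hxy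
  have hinj : Function.Injective e := fun i j hij =>
    by_contra fun hne => hdisj i j hne (e i) (he i) (hij ▸ he j)
  simpa using Finset.card_le_card_of_injOn (s := Finset.univ) e (fun i _ => hcut i) hinj.injOn

variable [Finite V]

theorem exists_edgeDisjoint_ttrails
    (hcut : ∀ h : V → ZMod 2, h x ≠ h y → k ≤ #(G.cutEdges h)) :
    ∃ p : Fin k → List (V × E), (∀ i, G.IsTtrail x y (p i)) ∧
      ∀ i j, i ≠ j → EdgeDisjoint (p i) (p j) := by
  classical
  obtain ⟨φ, hφ⟩ := exists_isUnitFlow hcut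
  obtain ⟨p, htrail, hdisj, -⟩ := hφ.exists_edgeDisjoint_ttrails
  exact ⟨p, htrail, hdisj⟩

theorem kConn_iff : G.KConn k x y ↔ ∀ h : V → ZMod 2, #(G.cutEdges h) < k → h x = h y := by
  constructor
  · rintro (rfl | ⟨p, hp, hdisj⟩) h hlt
    · rfl
    · exact by_contra fun hxy => hlt.not_ge (le_card_cutEdges hp hdisj hxy)
  · intro hcut
    exact .inr (exists_edgeDisjoint_ttrails fun h hxy => not_lt.1 fun hlt => hxy (hcut h hlt))

end Menger

/-! ### Sums over edge sets and the cycle space -/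

section FSum

variable {X A : Type*} [Fintype X] [AddCommGroup A]

lemma zmod_two_eq_zero_or_one (a : ZMod 2) : a = 0 ∨ a = 1 := by
  revert a
  decide

lemma fSum_eq_sum_ite (f : X → A) (c : X → ZMod 2) :
    fSum f c = ∑ x, if c x = 1 then f x else 0 :=
  Finset.sum_filter _ _

lemma fSum_zero (f : X → A) : fSum f 0 = 0 := by
  simp [fSum]

lemma fSum_add_left (f g : X → A) (c : X → ZMod 2) : fSum (f + g) c = fSum f c + fSum g c :=
  Finset.sum_add_distrib

lemma fSum_neg_left (f : X → A) (c : X → ZMod 2) : fSum (-f) c = -fSum f c :=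
  Finset.sum_neg_distrib _

lemma fSum_add_add_two_nsmul_fSum_mul (f : X → A) (c d : X → ZMod 2) :
    fSum f (c + d) + 2 • fSum f (c * d) = fSum f c + fSum f d := by
  simp only [fSum_eq_sum_ite, Finset.smul_sum, ← Finset.sum_add_distrib]
  refine Finset.sum_congr rfl fun x _ => ?_
  rcases zmod_two_eq_zero_or_one (c x) with hc | hc <;>
    rcases zmod_two_eq_zero_or_one (d x) with hd | hd <;>
    simp [hc, hd, two_nsmul, CharTwo.add_self_eq_zero]

lemma fSum_add_of_mul_eq {f : X → A} {c d : X → ZMod 2} (h : c * d = d) :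
    fSum f (c + d) + fSum f d = fSum f c := by
  have hdisj : (c + d) * d = 0 := by
    ext x
    have hx : c x * d x = d x := congrFun h x
    rcases zmod_two_eq_zero_or_one (d x) with hd | hd <;>
      simp_all [CharTwo.add_self_eq_zero]
  have hsum : c + d + d = c := by
    rw [add_assoc, ZModModule.add_self, add_zero]
  rw [← fSum_add_add_two_nsmul_fSum_mul f (c + d) d, hdisj, hsum, fSum_zero, smul_zero, add_zero]

lemma fSum_eq_zero_of_exists_mul_eq {f : X → A} {U : Submodule (ZMod 2) (X → ZMod 2)}
    (h : ∀ c ∈ U, c ≠ 0 → ∃ d ∈ U, d ≠ 0 ∧ c * d = d ∧ fSum f d = 0) {c : X → ZMod 2}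
    (hc : c ∈ U) : fSum f c = 0 := by
  induction hn : #{x | c x = 1} using Nat.strong_induction_on generalizing c with
  | _ n ih =>
    by_cases hc0 : c = 0
    · rw [hc0, fSum_zero]
    obtain ⟨d, hd, hd0, hcd, hfd⟩ := h c hc hc0
    have hlt : #{x | (c + d) x = 1} < n := by
      obtain ⟨x, hx⟩ := Function.ne_iff.1 hd0
      have hd1 : d x = 1 := Fin.eq_one_of_ne_zero _ hx
      have hle : ∀ y, d y = 1 → c y = 1 := fun y hy => by
        simpa [hy] using congrFun hcd y
      have hsub : ∀ y, c y + d y = 1 → c y = 1 := fun y hy => by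
        rcases zmod_two_eq_zero_or_one (d y) with h | h
        · simpa [h] using hy
        · exact hle y h
      rw [← hn]
      refine Finset.card_lt_card (Finset.ssubset_iff_of_subset ?_ |>.2 ⟨x, ?_, ?_⟩)
      · exact Finset.monotone_filter_right _ fun y _ => hsub y
      · simpa using hle x hd1
      · simp [hle x hd1, hd1, CharTwo.add_self_eq_zero]
    rw [← fSum_add_of_mul_eq hcd, ih _ hlt (U.add_mem hc hd) rfl, hfd, add_zero]

end FSum

section Eps

variable {V E A : Type*} [DecidableEq E] [AddCommGroup A] {p : List (V × E)}

lemma eps_eq_one_iff {e : E} : eps p e = 1 ↔ e ∈ p.map Prod.snd := by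
  unfold eps
  split_ifs with h <;> simp [h]

lemma eps_cons {a : V × E} (ha : a.2 ∉ p.map Prod.snd) :
    eps (a :: p) = Pi.single a.2 1 + eps p := by
  ext e
  by_cases he : e = a.2
  · have hp : eps p e = 0 := if_neg (he ▸ ha)
    rw [Pi.add_apply, hp, he, Pi.single_eq_same, add_zero, eps_eq_one_iff]
    exact List.mem_cons_self
  · rw [Pi.add_apply, Pi.single_eq_of_ne he, zero_add]
    exact if_congr (by rw [List.map_cons, List.mem_cons, or_iff_right he]) rfl rfl

lemma fSum_eps [Fintype E] (f : E → A) (hp : (p.map Prod.snd).Nodup) :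
    fSum f (eps p) = pathSum (0 : V → A) f p := by
  have hfilter : ({e | eps p e = 1} : Finset E) = (p.map Prod.snd).toFinset := by
    ext e
    rw [Finset.mem_filter_univ, eps_eq_one_iff, List.mem_toFinset]
  rw [fSum, hfilter, List.sum_toFinset f hp, List.map_map, pathSum]
  simp [Function.comp_def]

end Eps

section Boundary

variable {V E M : Type*} [DecidableEq V] [AddCommGroup M] [Module (ZMod 2) M]
  {G : Multigraph V E} {x y : V} {p : List (V × E)}

lemma edgeVec_eq {e : E} {a b : V} (h : G.ends e = s(a, b)) :
    G.edgeVec e = vert a + vert b := by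
  ext v
  simp [edgeVec, vert, h]

lemma sum_vert_smul [Fintype V] (x : V) (g : V → M) : ∑ v, vert x v • g v = g x := by
  simp [vert, ite_smul]

lemma sum_edgeVec_smul [Fintype V] (g : V → M) (e : E) :
    ∑ v, G.edgeVec e v • g v = G.coboundary g e := by
  cases h : G.ends e with
  | h a b =>
    simp only [edgeVec_eq h, coboundary_apply g h, Pi.add_apply, add_smul, Finset.sum_add_distrib,
      sum_vert_smul]

variable [Fintype E]

lemma sum_boundary_smul [Fintype V] (c : E → ZMod 2) (g : V → M) :
    ∑ v, G.boundary c v • g v = ∑ e, c e • G.coboundary g e := by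
  calc ∑ v, G.boundary c v • g v = ∑ v, ∑ e, c e • G.edgeVec e v • g v := by
        simp [boundary, Finset.sum_smul, mul_smul]
    _ = ∑ e, c e • G.coboundary g e := by
        rw [Finset.sum_comm]
        simp only [← Finset.smul_sum, sum_edgeVec_smul]

variable [DecidableEq E]

lemma boundary_single (G : Multigraph V E) (e : E) :
    G.boundary (Pi.single e 1) = G.edgeVec e := by
  ext v
  simp [boundary, Pi.single_apply]

lemma IsTtrail.boundary_eps (h : G.IsTtrail x y p) : G.boundary (eps p) = vert x + vert y := by
  induction p generalizing x with
  | nil =>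
    have heps : eps ([] : List (V × E)) = 0 := rfl
    rw [heps, map_zero, show x = y from h.1, ZModModule.add_self]
  | cons a p ih =>
    obtain ⟨⟨-, w, hends, hp⟩, hnodup⟩ := h
    rw [List.map_cons, List.nodup_cons] at hnodup
    rw [eps_cons hnodup.1, map_add, boundary_single, edgeVec_eq hends, ih ⟨hp, hnodup.2⟩,
      add_assoc, ← add_assoc (vert w), ZModModule.add_self, zero_add]

lemma IsTtrail.eps_mem_cycleSpace (h : G.IsTtrail x x p) : eps p ∈ G.cycleSpace := by
  rw [cycleSpace, LinearMap.mem_ker, h.boundary_eps, ZModModule.add_self]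

end Boundary

section Comap

variable {V E E' : Type*} {x y : V} {p : List (V × E')}

/-- The multigraph with edge set `E'` obtained from `G` by replacing each edge `e` by as many
parallel copies as there are elements of the fibre `π ⁻¹' {e}`. -/
def comapEdges (G : Multigraph V E) (π : E' → E) : Multigraph V E' where
  ends e := G.ends (π e)

variable {G : Multigraph V E} {π : E' → E}

lemma coboundary_comapEdges {M : Type*} [AddCommGroup M] [Module (ZMod 2) M] (g : V → M) (e : E') :
    (G.comapEdges π).coboundary g e = G.coboundary g (π e) :=
  rfl

lemma IsChain.of_comapEdges (h : (G.comapEdges π).IsChain x y p) :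
    G.IsChain x y (p.map (Prod.map id π)) := by
  induction p generalizing x with
  | nil => exact h
  | cons a p ih =>
    obtain ⟨ha, w, hends, hp⟩ := h
    exact ⟨ha, w, hends, ih hp⟩

lemma IsTtrail.of_comapEdges (hπ : Function.Injective π) (h : (G.comapEdges π).IsTtrail x y p) :
    G.IsTtrail x y (p.map (Prod.map id π)) := by
  refine ⟨h.1.of_comapEdges, ?_⟩
  have hmap : (p.map (Prod.map id π)).map Prod.snd = (p.map Prod.snd).map π := by
    simp [Function.comp_def]
  rw [hmap]
  exact h.2.map hπ

end Comap

section Euler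

variable {V E A : Type*} [Finite V] [Fintype E] [DecidableEq V] [AddCommGroup A]
  {G : Multigraph V E} {c : E → ZMod 2} {e : E} {f : E → A}

lemma exists_ne_mem_cutEdges (hc : c ∈ G.cycleSpace) (he : c e = 1) {h : V → ZMod 2}
    (hcut : e ∈ G.cutEdges h) : ∃ e', c e' = 1 ∧ e' ≠ e ∧ e' ∈ G.cutEdges h := by
  cases nonempty_fintype V
  by_contra! hne
  have hsum : ∑ e', c e' • G.coboundary h e' = 0 := by
    rw [← sum_boundary_smul, LinearMap.mem_ker.1 hc]
    simp
  rw [Finset.sum_eq_single e, he, mem_cutEdges.1 hcut] at hsum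
  · simp at hsum
  · intro e' _ he'
    rcases zmod_two_eq_zero_or_one (c e') with h0 | h1
    · rw [h0, zero_smul]
    · have hcob : G.coboundary h e' ≠ 1 := fun h => hne e' h1 he' (mem_cutEdges.2 h)
      rw [(zmod_two_eq_zero_or_one _).resolve_right hcob, smul_zero]
  · simp

/-- Menger's theorem in the subgraph `c` without `e` closes up the edge `e`. -/
lemma exists_closed_ttrail (hc : c ∈ G.cycleSpace) (he : c e = 1) :
    ∃ x p, G.IsTtrail x x p ∧ e ∈ p.map Prod.snd ∧ ∀ e' ∈ p.map Prod.snd, c e' = 1 := by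
  classical
  let π : {e' // c e' = 1 ∧ e' ≠ e} → E := Subtype.val
  cases hends : G.ends e with
  | h a b =>
    have hcut : ∀ h : V → ZMod 2, h b ≠ h a → 1 ≤ #((G.comapEdges π).cutEdges h) := by
      intro h hba
      obtain ⟨e', hce', hne, he'⟩ :=
        exists_ne_mem_cutEdges hc he ((mem_cutEdges_iff_ne hends).2 hba.symm)
      rw [mem_cutEdges, ← coboundary_comapEdges (π := π) h ⟨e', hce', hne⟩] at he'
      exact Finset.card_pos.2 ⟨_, mem_cutEdges.2 he'⟩
    obtain ⟨p, hp, -⟩ := exists_edgeDisjoint_ttrails hcut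
    have htrail := (hp 0).of_comapEdges Subtype.val_injective
    have hmem : ∀ e' ∈ ((p 0).map (Prod.map id π)).map Prod.snd, c e' = 1 ∧ e' ≠ e := by
      simp +contextual [π]
    refine ⟨a, (a, e) :: (p 0).map (Prod.map id π), ⟨⟨rfl, b, hends, htrail.1⟩, ?_⟩, ?_, ?_⟩
    · exact List.nodup_cons.2 ⟨fun h => (hmem e h).2 rfl, htrail.2⟩
    · exact List.mem_cons_self
    · exact List.forall_mem_cons.2 ⟨he, fun e' he' => (hmem e' he').1⟩

theorem balancedE_iff : G.BalancedE f ↔ ∀ c ∈ G.cycleSpace, fSum f c = 0 := by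
  classical
  constructor
  · refine fun hf c => fSum_eq_zero_of_exists_mul_eq fun c hc hc0 => ?_
    obtain ⟨e, he⟩ := Function.ne_iff.1 hc0
    obtain ⟨x, p, hp, hep, hpc⟩ := exists_closed_ttrail hc (Fin.eq_one_of_ne_zero _ he)
    refine ⟨eps p, hp.eps_mem_cycleSpace, fun h0 => ?_, ?_, ?_⟩
    · simpa [h0] using eps_eq_one_iff.2 hep
    · ext e'
      by_cases he' : e' ∈ p.map Prod.snd
      · simp [hpc e' he']
      · rw [Pi.mul_apply, show eps p e' = 0 from if_neg he', mul_zero]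
    · rw [fSum_eps f hp.2, hf x p hp]
  · intro hf x p hp
    rw [← fSum_eps f hp.2, hf _ hp.eps_mem_cycleSpace]

end Euler

/-! ### Rings of subsets -/

section SetRing

/-- A ring of subsets of `X`, the subsets being encoded by their indicator functions with values in
`F₂`, so that the ring operations are symmetric difference and intersection. The whole set `X` need
not be a member. -/
abbrev SetRing (X : Type*) : Type _ := NonUnitalSubalgebra (ZMod 2) (X → ZMod 2)

namespace SetRing

variable {X : Type*} (U : SetRing X)

/-- The relation of not being separated by any member of `U`. -/
def indist : Setoid X where
  r x y := ∀ c ∈ U, c x = c y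
  iseqv := ⟨fun _ _ _ => rfl, fun h c hc => (h c hc).symm,
    fun h h' c hc => (h c hc).trans (h' c hc)⟩

open scoped Classical in
/-- The indicator function of the `U.indist`-class of `x`. It is an atom of `U` as soon as some
member of `U` contains `x`. -/
noncomputable def atom (x : X) : X → ZMod 2 := fun y => if U.indist x y then 1 else 0

/-- A chosen representative of the `U.indist`-class of `x`. -/
noncomputable def rep (x : X) : X := (Quotient.mk U.indist x).out

/-- The chosen representatives of those classes that are members of `U`. -/
def IsPivot (x : X) : Prop := U.rep x = x ∧ U.atom x ∈ U

variable {U} {x y : X} {c : X → ZMod 2}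

lemma atom_eq_one_iff : U.atom x y = 1 ↔ U.indist x y := by
  unfold atom
  split_ifs with h <;> simp [h]

lemma atom_eq_zero_of_not (h : ¬ U.indist x y) : U.atom x y = 0 :=
  if_neg h

lemma atom_self (x : X) : U.atom x x = 1 :=
  atom_eq_one_iff.2 (Setoid.refl' _ x)

lemma atom_ne_zero (x : X) : U.atom x ≠ 0 := fun h => by
  simpa [h] using atom_self (U := U) x

lemma atom_congr (h : U.indist x y) : U.atom x = U.atom y := by
  ext z
  by_cases hz : U.indist y z
  · rw [atom_eq_one_iff.2 hz, atom_eq_one_iff.2 (Setoid.trans' _ h hz)]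
  · rw [atom_eq_zero_of_not hz,
      atom_eq_zero_of_not fun hxz => hz (Setoid.trans' _ (Setoid.symm' _ h) hxz)]

lemma mul_atom (hc : c ∈ U) (x : X) : c * U.atom x = c x • U.atom x := by
  ext y
  by_cases h : U.indist x y
  · simp [atom_eq_one_iff.2 h, h c hc]
  · simp [atom_eq_zero_of_not h]

lemma indist_rep (x : X) : U.indist (U.rep x) x :=
  Quotient.mk_out (s := U.indist) x

lemma rep_congr (h : U.indist x y) : U.rep x = U.rep y :=
  congrArg Quotient.out (Quotient.sound (s := U.indist) h)

lemma IsPivot.eq_of_indist (hx : U.IsPivot x) (hy : U.IsPivot y) (h : U.indist x y) : x = y := by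
  rw [← hx.1, rep_congr h, hy.1]

lemma isPivot_rep (h : U.atom x ∈ U) : U.IsPivot (U.rep x) :=
  ⟨rep_congr (indist_rep x), by rwa [atom_congr (indist_rep x)]⟩

lemma exists_mem_separating (hc : c ∈ U) (hx : c x = 1) (h : ¬ U.indist x y) :
    ∃ d ∈ U, d x = 1 ∧ d y = 0 := by
  obtain ⟨d, hd, hxy⟩ : ∃ d ∈ U, d x ≠ d y := by
    by_contra! h'
    exact h h'
  rcases zmod_two_eq_zero_or_one (d x) with h0 | h1
  · have hy : d y = 1 := Fin.eq_one_of_ne_zero _ (h0 ▸ hxy.symm)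
    exact ⟨c + c * d, add_mem hc (mul_mem hc hd), by simp [hx, h0],
      by simp [hy, CharTwo.add_self_eq_zero]⟩
  · exact ⟨d, hd, h1, (zmod_two_eq_zero_or_one _).resolve_right fun h => hxy (h1.trans h.symm)⟩

lemma atom_mem [Finite X] (hc : c ∈ U) (hx : c x = 1) : U.atom x ∈ U := by
  classical
  cases nonempty_fintype X
  have hsep : ∀ S : Finset X, ∃ d ∈ U, d x = 1 ∧ ∀ y ∈ S, ¬ U.indist x y → d y = 0 := by
    intro S
    induction S using Finset.induction_on with
    | empty => exact ⟨c, hc, hx, by simp⟩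
    | insert y S _ ih =>
      obtain ⟨d, hd, hdx, hdS⟩ := ih
      by_cases hy : U.indist x y
      · exact ⟨d, hd, hdx, by simpa [hy] using hdS⟩
      · obtain ⟨d', hd', hdx', hdy'⟩ := exists_mem_separating hc hx hy
        refine ⟨d * d', mul_mem hd hd', by simp [hdx, hdx'], ?_⟩
        simp +contextual [hdy', hdS]
  obtain ⟨d, hd, hdx, hsep⟩ := hsep Finset.univ
  convert hd
  ext y
  by_cases hy : U.indist x y
  · rw [atom_eq_one_iff.2 hy, ← hy d hd, hdx]
  · rw [atom_eq_zero_of_not hy, hsep y (Finset.mem_univ y) hy]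

lemma exists_atom_mem [Finite X] (hc : c ∈ U) (hc0 : c ≠ 0) : ∃ x, c x = 1 ∧ U.atom x ∈ U := by
  obtain ⟨x, hx⟩ := Function.ne_iff.1 hc0
  have hx : c x = 1 := Fin.eq_one_of_ne_zero _ hx
  exact ⟨x, hx, atom_mem hc hx⟩

lemma atom_pivot_apply [DecidableEq X] (x y : {x // U.IsPivot x}) :
    U.atom x y = if x = y then 1 else 0 := by
  by_cases h : x = y
  · rw [if_pos h, h, atom_self]
  · rw [if_neg h, atom_eq_zero_of_not fun h' => h (Subtype.ext (x.2.eq_of_indist y.2 h'))]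

section Card

variable [Finite X]

variable (U)

lemma finrank_eq_card_isPivot : Module.finrank (ZMod 2) U = Nat.card {x // U.IsPivot x} := by
  classical
  cases nonempty_fintype X
  let restrict : U →ₗ[ZMod 2] {x // U.IsPivot x} → ZMod 2 :=
    LinearMap.funLeft (ZMod 2) (ZMod 2) Subtype.val ∘ₗ U.toSubmodule.subtype
  have hinj : Function.Injective restrict := by
    refine (injective_iff_map_eq_zero restrict).2 fun c hc => by_contra fun hc0 => ?_
    obtain ⟨x, hx, hatom⟩ := exists_atom_mem c.2 (Subtype.coe_ne_coe.2 hc0)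
    have hrep : (c : X → ZMod 2) (U.rep x) = 0 := congrFun hc ⟨_, isPivot_rep hatom⟩
    rw [indist_rep x c c.2, hx] at hrep
    exact one_ne_zero hrep
  have hsurj : Function.Surjective restrict := by
    intro t
    refine ⟨⟨∑ x, t x • U.atom x, sum_mem fun x _ => SMulMemClass.smul_mem _ x.2.2⟩, ?_⟩
    ext y
    change (∑ x, t x • U.atom x) y = t y
    simp [atom_pivot_apply]
  rw [(LinearEquiv.ofBijective restrict ⟨hinj, hsurj⟩).finrank_eq,
    Module.finrank_fintype_fun_eq_card, Nat.card_eq_fintype_card]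

variable {U}

lemma isPivot_iff (h1 : 1 ∈ U) : U.IsPivot x ↔ U.rep x = x :=
  and_iff_left (atom_mem h1 rfl)

lemma card_quotient_indist (h1 : 1 ∈ U) :
    Nat.card (Quotient U.indist) = Module.finrank (ZMod 2) U := by
  rw [finrank_eq_card_isPivot]
  refine Nat.card_congr (Equiv.ofBijective (fun q => ⟨q.out, (isPivot_iff h1).2 ?_⟩) ⟨?_, ?_⟩)
  · exact congrArg Quotient.out q.out_eq
  · exact fun q q' h => Quotient.out_injective (Subtype.ext_iff.1 h)
  · exact fun x => ⟨Quotient.mk _ x.1, Subtype.ext x.2.1⟩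

end Card

section Annihilator

variable [Fintype X] {A : Type*} [AddCommGroup A] {f : X → A}

variable (U A) in
/-- The functions on `X` whose sum over every member of `U` vanishes. -/
def annihilator : AddSubgroup (X → A) where
  carrier := {f | ∀ c ∈ U, fSum f c = 0}
  zero_mem' := fun _ _ => Finset.sum_const_zero
  add_mem' := fun hf hg c hc => by rw [fSum_add_left, hf c hc, hg c hc, add_zero]
  neg_mem' := fun hf c hc => by rw [fSum_neg_left, hf c hc, neg_zero]

lemma mem_annihilator_of_atom (h : ∀ x, U.atom x ∈ U → fSum f (U.atom x) = 0) :
    f ∈ U.annihilator A := by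
  refine fun c => fSum_eq_zero_of_exists_mul_eq (U := U.toSubmodule) fun c hc hc0 => ?_
  obtain ⟨x, hx, hatom⟩ := exists_atom_mem hc hc0
  exact ⟨U.atom x, hatom, atom_ne_zero x, by rw [mul_atom hc, hx, one_smul], h x hatom⟩

lemma fSum_atom_of_isPivot (hf : ∀ y, ¬ U.IsPivot y → f y = 0) (hx : U.IsPivot x) :
    fSum f (U.atom x) = f x := by
  refine Finset.sum_eq_single_of_mem x (by simp [atom_self]) fun y hy hyx => hf y fun hy' => hyx ?_
  exact (hx.eq_of_indist hy' (atom_eq_one_iff.1 (Finset.mem_filter.1 hy).2)).symm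

lemma eq_zero_of_mem_annihilator (hfU : f ∈ U.annihilator A) (hf : ∀ y, ¬ U.IsPivot y → f y = 0) :
    f = 0 := by
  ext x
  by_cases hx : U.IsPivot x
  · rw [← fSum_atom_of_isPivot hf hx, hfU _ hx.2, Pi.zero_apply]
  · exact hf x hx

lemma exists_mem_annihilator (f : X → A) :
    ∃ g ∈ U.annihilator A, ∀ x, ¬ U.IsPivot x → g x = f x := by
  classical
  set t : X → A := fun x => if U.IsPivot x then -fSum f (U.atom x) else 0
  have ht : ∀ x, ¬ U.IsPivot x → t x = 0 := fun x hx => if_neg hx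
  refine ⟨f + t, mem_annihilator_of_atom fun x hx => ?_, fun x hx => by simp [ht x hx]⟩
  have hrep := isPivot_rep hx
  rw [← atom_congr (indist_rep x), fSum_add_left, fSum_atom_of_isPivot ht hrep]
  exact (congrArg _ (if_pos hrep)).trans (add_neg_cancel _)

variable (U A) in
/-- A function on `X` that sums to zero over every member of `U` can be prescribed arbitrarily off
the pivots and is then unique. -/
noncomputable def annihilatorEquiv : U.annihilator A ≃+ ({x // ¬ U.IsPivot x} → A) :=
  AddEquiv.ofBijective
    ((LinearMap.funLeft ℤ A Subtype.val).toAddMonoidHom.comp (U.annihilator A).subtype)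
    ⟨(injective_iff_map_eq_zero _).2 fun f hf =>
        Subtype.ext (eq_zero_of_mem_annihilator f.2 fun y hy => congrFun hf ⟨y, hy⟩),
      fun t => by
        classical
        obtain ⟨g, hg, hgt⟩ := exists_mem_annihilator (U := U)
          fun x => if hx : U.IsPivot x then (0 : A) else t ⟨x, hx⟩
        exact ⟨⟨g, hg⟩, funext fun x => (hgt x x.2).trans (dif_neg x.2)⟩⟩

end Annihilator

section Orthogonal

variable [Fintype X] {M : Type*} [AddCommGroup M] [Module (ZMod 2) M]

lemma sum_smul_comp_rep_eq_zero (h1 : 1 ∈ U) {b : X → ZMod 2} (hb : ∀ c ∈ U, b ⬝ᵥ c = 0)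
    (g : X → M) : ∑ x, b x • g (U.rep x) = 0 := by
  classical
  rw [← Finset.sum_fiberwise Finset.univ (Quotient.mk U.indist)]
  refine Finset.sum_eq_zero fun q _ => ?_
  have hmem : ∀ x, Quotient.mk U.indist x = q ↔ U.atom q.out x = 1 := fun x => by
    rw [atom_eq_one_iff, eq_comm, ← Quotient.out_eq q, Quotient.eq, Quotient.out_eq]
  calc ∑ x with Quotient.mk U.indist x = q, b x • g (U.rep x)
      = ∑ x with Quotient.mk U.indist x = q, b x • g q.out :=
        Finset.sum_congr rfl fun x hx => by rw [rep, (Finset.mem_filter.1 hx).2]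
    _ = (b ⬝ᵥ U.atom q.out) • g q.out := by
        rw [Finset.sum_filter, dotProduct, Finset.sum_smul]
        refine Finset.sum_congr rfl fun x _ => ?_
        by_cases hx : U.atom q.out x = 1
        · rw [if_pos ((hmem x).2 hx), hx, mul_one]
        · rw [if_neg (mt (hmem x).1 hx), (zmod_two_eq_zero_or_one _).resolve_right hx, mul_zero,
            zero_smul]
    _ = 0 := by rw [hb _ (atom_mem h1 rfl), zero_smul]

end Orthogonal

end SetRing

end SetRing

/-! ### Small cuts -/

section SmallCuts

variable {V E : Type*} [Fintype E] {G : Multigraph V E} {n : ℕ}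

lemma card_cutEdges_eq_sum (h : V → ZMod 2) :
    #(G.cutEdges h) = ∑ e, if G.coboundary h e = 1 then 1 else 0 :=
  Finset.card_filter _ _

lemma sum_card_cutEdges_corners_le (h k : V → ZMod 2) :
    #(G.cutEdges (h * k)) + #(G.cutEdges (h * (1 + k))) + #(G.cutEdges ((1 + h) * k)) +
      #(G.cutEdges ((1 + h) * (1 + k))) ≤ 2 * #(G.cutEdges h) + 2 * #(G.cutEdges k) := by
  have hedge : ∀ i i' j j' : ZMod 2,
      (if i * j + i' * j' = 1 then 1 else 0) +
        (if i * (1 + j) + i' * (1 + j') = 1 then 1 else 0) +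
        (if (1 + i) * j + (1 + i') * j' = 1 then 1 else 0) +
        (if (1 + i) * (1 + j) + (1 + i') * (1 + j') = 1 then 1 else 0) ≤
      2 * (if i + i' = 1 then 1 else 0) + 2 * (if j + j' = 1 then 1 else 0) := by
    decide
  simp only [card_cutEdges_eq_sum, Finset.mul_sum, ← Finset.sum_add_distrib]
  refine Finset.sum_le_sum fun e _ => ?_
  cases hends : G.ends e with
  | h a b =>
    simp only [coboundary_apply _ hends, Pi.mul_apply, Pi.add_apply, Pi.one_apply]
    exact hedge (h a) (h b) (k a) (k b)

lemma cutEdges_one : G.cutEdges 1 = ∅ := by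
  ext e
  cases hends : G.ends e with
  | h a b => simp [mem_cutEdges_iff_ne hends]

lemma mul_mem_span_small_cuts {h k : V → ZMod 2} (hh : #(G.cutEdges h) < n)
    (hk : #(G.cutEdges k) < n) :
    h * k ∈ Submodule.span (ZMod 2) {h | #(G.cutEdges h) < n} := by
  set B := Submodule.span (ZMod 2) {h | #(G.cutEdges h) < n}
  have small_mem : ∀ {h}, #(G.cutEdges h) < n → h ∈ B := fun h => Submodule.subset_span h
  have hone : 1 ∈ B := small_mem (by rw [cutEdges_one, Finset.card_empty]; omega)
  have hcorners := G.sum_card_cutEdges_corners_le h k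
  rcases (by omega : #(G.cutEdges (h * k)) < n ∨ #(G.cutEdges (h * (1 + k))) < n ∨
    #(G.cutEdges ((1 + h) * k)) < n ∨ #(G.cutEdges ((1 + h) * (1 + k))) < n) with hc | hc | hc | hc
  · exact small_mem hc
  · rw [show h * k = h * (1 + k) - h by ring]
    exact sub_mem (small_mem hc) (small_mem hh)
  · rw [show h * k = (1 + h) * k - k by ring]
    exact sub_mem (small_mem hc) (small_mem hk)
  · rw [show h * k = (1 + h) * (1 + k) - (1 + h + k) by ring]
    exact sub_mem (small_mem hc) (add_mem (add_mem hone (small_mem hh)) (small_mem hk))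

variable (G n) in
/-- The ring of vertex sets generated by those whose cut has fewer than `n` edges. By
submodularity of cuts their linear span is already closed under intersection. -/
def smallCutRing : SetRing V :=
  (Submodule.span (ZMod 2) {h | #(G.cutEdges h) < n}).toNonUnitalSubalgebra fun a b ha hb => by
    induction ha, hb using Submodule.span_induction₂ with
    | mem_mem a b ha hb => exact mul_mem_span_small_cuts ha hb
    | zero_left b _ => simp
    | zero_right a _ => simp
    | add_left a a' b _ _ _ h h' => rw [add_mul]; exact add_mem h h'
    | add_right a b b' _ _ _ h h' => rw [mul_add]; exact add_mem h h'
    | smul_left r a b _ _ h => rw [smul_mul_assoc]; exact Submodule.smul_mem _ r h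
    | smul_right r a b _ _ h => rw [mul_smul_comm]; exact Submodule.smul_mem _ r h

lemma mem_smallCutRing_of_card_lt {h : V → ZMod 2} (hh : #(G.cutEdges h) < n) :
    h ∈ G.smallCutRing n :=
  Submodule.subset_span hh

lemma one_mem_smallCutRing (hn : n ≠ 0) : 1 ∈ G.smallCutRing n :=
  mem_smallCutRing_of_card_lt (by simpa [cutEdges_one] using Nat.pos_of_ne_zero hn)

lemma smallCutRing_le_iff {B : Submodule (ZMod 2) (V → ZMod 2)} :
    (G.smallCutRing n).toSubmodule ≤ B ↔ ∀ h, #(G.cutEdges h) < n → h ∈ B :=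
  Submodule.span_le

lemma smallCutRing_one :
    (G.smallCutRing 1).toSubmodule = LinearMap.ker (G.coboundary (M := ZMod 2)) := by
  have hker : ∀ h : V → ZMod 2, #(G.cutEdges h) < 1 ↔ G.coboundary h = 0 := fun h => by
    rw [Nat.lt_one_iff, Finset.card_eq_zero, cutEdges, Finset.filter_eq_empty_iff, funext_iff]
    exact ⟨fun h e => (zmod_two_eq_zero_or_one _).resolve_right (h (Finset.mem_univ e)),
      fun h e _ => by simp [h e]⟩
  exact le_antisymm (smallCutRing_le_iff.2 fun h => (hker h).1)
    fun h hh => mem_smallCutRing_of_card_lt ((hker h).2 hh)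

lemma indist_smallCutRing_iff {x y : V} :
    (G.smallCutRing n).indist x y ↔ ∀ h : V → ZMod 2, #(G.cutEdges h) < n → h x = h y := by
  let B : Submodule (ZMod 2) (V → ZMod 2) :=
    LinearMap.eqLocus (LinearMap.proj x) (LinearMap.proj y)
  exact smallCutRing_le_iff (B := B)

theorem indist_smallCutRing_iff_kConn [Finite V] {x y : V} :
    (G.smallCutRing n).indist x y ↔ G.KConn n x y := by
  rw [indist_smallCutRing_iff, kConn_iff]

theorem conk_eq_finrank [Finite V] (hn : n ≠ 0) :
    G.conk n = Module.finrank (ZMod 2) (G.smallCutRing n) := by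
  have hsetoid : Relation.EqvGen.setoid (G.KConn n) = (G.smallCutRing n).indist :=
    Setoid.ext fun x y => by
      have hrel : G.KConn n = (G.smallCutRing n).indist :=
        funext₂ fun x y => propext indist_smallCutRing_iff_kConn.symm
      exact hrel ▸ (G.smallCutRing n).indist.iseqv.eqvGen_iff
  rw [conk, hsetoid, SetRing.card_quotient_indist (one_mem_smallCutRing hn)]

lemma card_not_isPivot_smallCutRing [Fintype V] (hn : n ≠ 0) :
    Nat.card {v // ¬ (G.smallCutRing n).IsPivot v} = Fintype.card V - G.conk n := by
  classical
  rw [conk_eq_finrank hn, SetRing.finrank_eq_card_isPivot, Nat.card_eq_fintype_card,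
    Nat.card_eq_fintype_card, Fintype.card_subtype_compl]

lemma finrank_map_coboundary_add_con [Finite V] (hn : n ≠ 0) :
    Module.finrank (ZMod 2) ((G.smallCutRing n).toSubmodule.map (G.coboundary (M := ZMod 2))) +
      G.con = G.conk n := by
  have hker : LinearMap.ker (G.coboundary (M := ZMod 2)) ≤ (G.smallCutRing n).toSubmodule := by
    rw [← smallCutRing_one, smallCutRing_le_iff]
    exact fun h hh => mem_smallCutRing_of_card_lt (by omega)
  have hcon : G.con = Module.finrank (ZMod 2) (LinearMap.ker (G.coboundary (M := ZMod 2))) := by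
    rw [con, conk_eq_finrank one_ne_zero, ← smallCutRing_one]
    rfl
  rw [conk_eq_finrank hn, hcon]
  have hrank := LinearMap.finrank_range_add_finrank_ker
    ((G.coboundary (M := ZMod 2)).domRestrict (G.smallCutRing n).toSubmodule)
  rwa [LinearMap.range_domRestrict, LinearMap.ker_domRestrict,
    (Submodule.comapSubtypeEquivOfLe hker).finrank_eq] at hrank

end SmallCuts

/-! ### Weak cycles -/

section WeakCycles

variable {V E : Type*} [Fintype E] {G : Multigraph V E} {c : E → ZMod 2}

lemma sum_mul_eq_zero_of_card_lt_three {X : Type*} {S : Finset X} (hS : #S < 3) {c d : X → ZMod 2}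
    (hc : ∑ x ∈ S, c x = 0) (hd : ∑ x ∈ S, d x = 0) : ∑ x ∈ S, (c * d) x = 0 := by
  classical
  interval_cases hcard : #S
  · simp [Finset.card_eq_zero.1 hcard]
  · obtain ⟨x, rfl⟩ := Finset.card_eq_one.1 hcard
    simp_all
  · obtain ⟨x, y, hxy, rfl⟩ := Finset.card_eq_two.1 hcard
    rw [Finset.sum_pair hxy, CharTwo.add_eq_zero] at hc hd ⊢
    rw [Pi.mul_apply, hc, hd, Pi.mul_apply]

variable (G) in
/-- The edge sets that meet every cut with fewer than `3` edges in an even number of edges. These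
are the `3`-weak cycles: the chains whose boundary is orthogonal to `G.smallCutRing 3`. -/
def weakCycleRing : SetRing E where
  carrier := {c | ∀ h : V → ZMod 2, #(G.cutEdges h) < 3 → ∑ e ∈ G.cutEdges h, c e = 0}
  zero_mem' := fun _ _ => Finset.sum_const_zero
  add_mem' := fun hc hd h hh => by
    simp only [Pi.add_apply, Finset.sum_add_distrib, hc h hh, hd h hh, add_zero]
  smul_mem' := fun r c hc h hh => by
    simp only [Pi.smul_apply, ← Finset.smul_sum, hc h hh, smul_zero]
  mul_mem' := fun hc hd h hh => sum_mul_eq_zero_of_card_lt_three hh (hc h hh) (hd h hh)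

lemma dotProduct_coboundary (c : E → ZMod 2) (h : V → ZMod 2) :
    c ⬝ᵥ G.coboundary h = ∑ e ∈ G.cutEdges h, c e := by
  rw [dotProduct, cutEdges, Finset.sum_filter]
  refine Finset.sum_congr rfl fun e _ => ?_
  rcases zmod_two_eq_zero_or_one (G.coboundary h e) with h | h <;> simp [h]

lemma mem_weakCycleRing_iff :
    c ∈ G.weakCycleRing ↔ ∀ h ∈ G.smallCutRing 3, c ⬝ᵥ G.coboundary h = 0 := by
  classical
  have hspan := smallCutRing_le_iff (G := G) (n := 3)
    (B := LinearMap.ker (dotProductEquiv (ZMod 2) E c ∘ₗ G.coboundary))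
  refine Iff.trans ?_ hspan.symm
  exact forall₂_congr fun h _ => by
    rw [← dotProduct_coboundary]
    rfl

lemma finrank_map_coboundary_add_finrank_weakCycleRing :
    Module.finrank (ZMod 2) ((G.smallCutRing 3).toSubmodule.map (G.coboundary (M := ZMod 2))) +
      Module.finrank (ZMod 2) G.weakCycleRing = Fintype.card E := by
  classical
  have hdual : G.weakCycleRing.toSubmodule =
      ((G.smallCutRing 3).toSubmodule.map (G.coboundary (M := ZMod 2))).dualAnnihilator.map
        (dotProductEquiv (ZMod 2) E).symm.toLinearMap := by
    ext c
    rw [Submodule.mem_map_equiv, LinearEquiv.symm_symm, Submodule.mem_dualAnnihilator]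
    refine mem_weakCycleRing_iff.trans ⟨?_, fun hc h hh => hc _ ⟨h, hh, rfl⟩⟩
    rintro hc _ ⟨h, hh, rfl⟩
    exact hc h hh
  change _ + Module.finrank (ZMod 2) G.weakCycleRing.toSubmodule = _
  rw [hdual, LinearEquiv.finrank_map_eq, Subspace.finrank_add_finrank_dualAnnihilator_eq,
    Module.finrank_fintype_fun_eq_card]

theorem card_not_isPivot_weakCycleRing [Finite V] :
    Nat.card {e // ¬ G.weakCycleRing.IsPivot e} = G.conk 3 - G.con := by
  classical
  have hcut := G.finrank_map_coboundary_add_con three_ne_zero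
  have hweak := G.finrank_map_coboundary_add_finrank_weakCycleRing
  rw [SetRing.finrank_eq_card_isPivot, Nat.card_eq_fintype_card] at hweak
  rw [Nat.card_eq_fintype_card, Fintype.card_subtype_compl]
  omega

variable [DecidableEq V]

lemma dotProduct_boundary [Fintype V] (c : E → ZMod 2) (h : V → ZMod 2) :
    G.boundary c ⬝ᵥ h = c ⬝ᵥ G.coboundary h :=
  sum_boundary_smul c h

variable [Finite V]

lemma cycleSpace_le_weakCycleRing : G.cycleSpace ≤ G.weakCycleRing.toSubmodule := fun c hc =>
  mem_weakCycleRing_iff.2 fun h _ => by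
    cases nonempty_fintype V
    rw [← dotProduct_boundary, LinearMap.mem_ker.1 hc, zero_dotProduct]

lemma mem_weakCycleRing_of_kConn {x y : V} (hxy : G.KConn 3 x y)
    (hc : G.boundary c = vert x + vert y) : c ∈ G.weakCycleRing := by
  cases nonempty_fintype V
  refine mem_weakCycleRing_iff.2 fun h hh => ?_
  have hvert : ∀ z, vert z ⬝ᵥ h = h z := fun z => sum_vert_smul z h
  rw [← dotProduct_boundary, hc, add_dotProduct, hvert, hvert,
    indist_smallCutRing_iff_kConn.2 hxy h hh, CharTwo.add_self_eq_zero]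

end WeakCycles

/-! ### Weak cycles sum to elements of order two -/

section Capacity

variable {V E : Type*} [Fintype E] {G : Multigraph V E} {k : ℕ} {x y : V}

lemma card_cutEdges_comapEdges_sigma (cap : E → ℕ) (h : V → ZMod 2) :
    #((G.comapEdges (Sigma.fst : (Σ e, Fin (cap e)) → E)).cutEdges h) =
      ∑ e ∈ G.cutEdges h, cap e := by
  have hsigma : (G.comapEdges (Sigma.fst : (Σ e, Fin (cap e)) → E)).cutEdges h =
      (G.cutEdges h).sigma fun _ => Finset.univ := by
    ext e
    simp only [mem_cutEdges, coboundary_comapEdges, Finset.mem_sigma, Finset.mem_univ, and_true]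
  simp only [hsigma, Finset.card_sigma, Finset.card_univ, Fintype.card_fin]

variable [DecidableEq V]

lemma boundary_comapEdges_sigma {cap : E → ℕ} (c : (Σ e, Fin (cap e)) → ZMod 2) :
    (G.comapEdges Sigma.fst).boundary c = G.boundary fun e => ∑ j, c ⟨e, j⟩ := by
  ext v
  simp only [boundary, LinearMap.coe_mk, AddHom.coe_mk, Fintype.sum_sigma, Finset.sum_mul]
  rfl

/-- Menger's theorem for the multigraph with `cap e` parallel copies of each edge `e`. -/
lemma exists_chains_of_capacity [Finite V] (cap : E → ℕ)
    (hcut : ∀ h : V → ZMod 2, h x ≠ h y → k ≤ ∑ e ∈ G.cutEdges h, cap e) :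
    ∃ c : Fin k → E → ZMod 2, (∀ i, G.boundary (c i) = vert x + vert y) ∧
      ∀ e, #{i | c i e = 1} ≤ cap e := by
  classical
  obtain ⟨p, hp, hdisj⟩ := exists_edgeDisjoint_ttrails (k := k) fun h hxy =>
    (hcut h hxy).trans_eq (G.card_cutEdges_comapEdges_sigma cap h).symm
  refine ⟨fun i e => ∑ j, eps (p i) ⟨e, j⟩, fun i => ?_, fun e => ?_⟩
  · rw [← boundary_comapEdges_sigma, (hp i).boundary_eps]
  · rw [← Fintype.card_fin (cap e), ← Finset.card_univ]
    refine Finset.card_le_card_of_forall_subsingleton (fun i j => eps (p i) ⟨e, j⟩ = 1) ?_ ?_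
    · intro i hi
      obtain ⟨j, hj, hne⟩ := Finset.exists_ne_zero_of_sum_ne_zero
        ((Finset.mem_filter.1 hi).2.trans_ne one_ne_zero)
      exact ⟨j, hj, Fin.eq_one_of_ne_zero _ hne⟩
    · rintro j - i ⟨-, hi⟩ i' ⟨-, hi'⟩
      exact by_contra fun hne =>
        hdisj i i' hne _ (eps_eq_one_iff.1 hi) (eps_eq_one_iff.1 hi')

end Capacity

section Doubling

variable {V E A : Type*} [Fintype E] [AddCommGroup A] {G : Multigraph V E}
  {c d : E → ZMod 2} {e : E} {f : E → A}

open scoped Classical in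
variable (G) in
/-- The multiplicities that make every cut separating the ends of `e` contain two further edges:
the edge `e` is deleted and the other edges of its class are doubled. -/
noncomputable def doubledCap (e : E) (e' : E) : ℕ :=
  if e' = e then 0 else if G.weakCycleRing.indist e e' then 2 else 1

lemma two_le_sum_doubledCap (he : G.weakCycleRing.atom e ∈ G.weakCycleRing) {h : V → ZMod 2}
    (hcut : e ∈ G.cutEdges h) : 2 ≤ ∑ e' ∈ G.cutEdges h, G.doubledCap e e' := by
  classical
  by_cases hcard : #(G.cutEdges h) < 3
  · obtain ⟨e', he', hne, hatom⟩ :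
        ∃ e' ∈ G.cutEdges h, e' ≠ e ∧ G.weakCycleRing.indist e e' := by
      by_contra! hne
      have hsum := he h hcard
      rw [Finset.sum_eq_single_of_mem e hcut fun e' he' hee' =>
        SetRing.atom_eq_zero_of_not (hne e' he' hee'), SetRing.atom_self] at hsum
      exact one_ne_zero hsum
    calc 2 = G.doubledCap e e' := by rw [doubledCap, if_neg hne, if_pos hatom]
      _ ≤ _ := Finset.single_le_sum_of_canonicallyOrdered he'
  · calc 2 ≤ #((G.cutEdges h).erase e) := by
          rw [Finset.card_erase_of_mem hcut]
          omega
      _ ≤ ∑ e' ∈ (G.cutEdges h).erase e, G.doubledCap e e' := by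
          refine (Finset.card_nsmul_le_sum _ _ 1 fun e' he' => ?_).trans' (by simp)
          rw [doubledCap, if_neg (Finset.ne_of_mem_erase he')]
          split_ifs <;> simp
      _ ≤ _ := Finset.sum_le_sum_of_subset (Finset.erase_subset _ _)

variable [Finite V]

lemma exists_mul_eq_atom [DecidableEq V] (he : G.weakCycleRing.atom e ∈ G.weakCycleRing) :
    ∃ c ∈ G.cycleSpace, ∃ d ∈ G.cycleSpace, c * d = G.weakCycleRing.atom e := by
  classical
  cases hends : G.ends e with
  | h a b =>
    obtain ⟨c, hc, hcap⟩ := exists_chains_of_capacity (k := 2) (G.doubledCap e) fun h hab =>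
      two_le_sum_doubledCap he ((mem_cutEdges_iff_ne hends).2 hab)
    have hce : ∀ i, c i e = 0 := fun i => by
      have hempty := Nat.le_zero.1 ((hcap e).trans_eq (if_pos rfl))
      refine (zmod_two_eq_zero_or_one _).resolve_right fun hi => ?_
      exact Finset.notMem_empty i (Finset.card_eq_zero.1 hempty ▸ by simpa using hi)
    have hcycle : ∀ i, c i + Pi.single e 1 ∈ G.cycleSpace := fun i => by
      rw [cycleSpace, LinearMap.mem_ker, map_add, hc, boundary_single, edgeVec_eq hends,
        ZModModule.add_self]
    refine ⟨_, hcycle 0, _, hcycle 1, funext fun e' => ?_⟩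
    by_cases he' : G.weakCycleRing.indist e e'
    · have hone : ∀ i, (c i + Pi.single e 1 : E → ZMod 2) e' = 1 := fun i => by
        rw [← he' _ (cycleSpace_le_weakCycleRing (hcycle i))]
        simp [hce]
      rw [Pi.mul_apply, hone, hone, SetRing.atom_eq_one_iff.2 he', mul_one]
    · have hne : e' ≠ e := by
        rintro rfl
        exact he' (Setoid.refl' _ e')
      have hle : #{i | c i e' = 1} ≤ 1 :=
        (hcap e').trans_eq (by rw [doubledCap, if_neg hne, if_neg he'])
      have hnot : ¬ (c 0 e' = 1 ∧ c 1 e' = 1) := fun h =>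
        zero_ne_one (Finset.card_le_one.1 hle 0 (by simpa using h.1) 1 (by simpa using h.2))
      rw [SetRing.atom_eq_zero_of_not he']
      rcases zmod_two_eq_zero_or_one (c 0 e') with h0 | h0
      · simp [h0, hne]
      · simp [(zmod_two_eq_zero_or_one _).resolve_right fun h1 => hnot ⟨h0, h1⟩, hne]

theorem two_nsmul_fSum_eq_zero (hf : G.BalancedE f) (hc : c ∈ G.weakCycleRing) :
    2 • fSum f c = 0 := by
  classical
  rw [balancedE_iff] at hf
  have hdouble : ∀ c, fSum (2 • f) c = 2 • fSum f c := fun c =>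
    Finset.sum_nsmul _ _ _
  suffices hann : 2 • f ∈ G.weakCycleRing.annihilator A from (hdouble c).symm.trans (hann c hc)
  refine SetRing.mem_annihilator_of_atom fun e he => ?_
  obtain ⟨c, hc, d, hd, hcd⟩ := exists_mul_eq_atom he
  have hadd := fSum_add_add_two_nsmul_fSum_mul f c d
  rwa [hcd, hf c hc, hf d hd, hf _ (add_mem hc hd), zero_add, add_zero, ← hdouble] at hadd

lemma fSum_add_of_mem_weakCycleRing (hf : G.BalancedE f) (hc : c ∈ G.weakCycleRing)
    (hd : d ∈ G.weakCycleRing) : fSum f (c + d) = fSum f c + fSum f d := by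
  rw [← fSum_add_add_two_nsmul_fSum_mul, two_nsmul_fSum_eq_zero hf (mul_mem hc hd), add_zero]

end Doubling

/-! ### The splitting -/

lemma exists_linearMap_apply_eq {F M₁ M₂ M₃ : Type*} [Field F] [AddCommGroup M₁] [Module F M₁]
    [AddCommGroup M₂] [Module F M₂] [AddCommGroup M₃] [Module F M₃] {φ : M₁ →ₗ[F] M₂}
    {ψ : M₁ →ₗ[F] M₃} (h : LinearMap.ker φ ≤ LinearMap.ker ψ) :
    ∃ χ : M₂ →ₗ[F] M₃, ∀ x, χ (φ x) = ψ x := by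
  obtain ⟨r, hr⟩ := ((LinearMap.ker φ).liftQ φ le_rfl).exists_leftInverse_of_injective
    (Submodule.ker_liftQ_eq_bot _ _ _ le_rfl)
  refine ⟨(LinearMap.ker φ).liftQ ψ h ∘ₗ r, fun x => ?_⟩
  exact congrArg ((LinearMap.ker φ).liftQ ψ h) (LinearMap.congr_fun hr (Submodule.Quotient.mk x))

section TorsionCoboundary

variable {V E A : Type*} [AddCommGroup A]

noncomputable instance torsion2.instModuleZModTwo : Module (ZMod 2) (torsion2 A) :=
  AddCommGroup.zmodModule fun a => Subtype.ext a.2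

lemma fSum_coe_torsion2 [Fintype E] (f : E → torsion2 A) (c : E → ZMod 2) :
    fSum (fun e => (f e : A)) c = ((∑ e, c e • f e : torsion2 A) : A) := by
  rw [fSum_eq_sum_ite, AddSubgroup.val_finsetSum]
  refine Finset.sum_congr rfl fun e _ => ?_
  rcases zmod_two_eq_zero_or_one (c e) with h | h <;> simp [h]

variable (G : Multigraph V E)

variable (A) in
/-- The coboundary of a vertex function with values in `A₂`, as an `A`-valued edge function: the
value at an edge is the sum of the values at its ends. -/
noncomputable def torsionCoboundary : (V → torsion2 A) →+ (E → A) :=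
  ((torsion2 A).subtype.compLeft E).comp G.coboundary.toAddMonoidHom

variable {G}

lemma fSum_torsionCoboundary [Fintype V] [DecidableEq V] [Fintype E] (g : V → torsion2 A)
    (c : E → ZMod 2) :
    fSum (G.torsionCoboundary A g) c = ((∑ v, G.boundary c v • g v : torsion2 A) : A) := by
  rw [sum_boundary_smul]
  exact fSum_coe_torsion2 (G.coboundary g) c

lemma torsionCoboundary_mem_Hgroup [Finite V] [Finite E] (g : V → torsion2 A) :
    G.torsionCoboundary A g ∈ G.Hgroup A := by
  classical
  cases nonempty_fintype V
  cases nonempty_fintype E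
  refine balancedE_iff.2 fun c hc => ?_
  rw [fSum_torsionCoboundary, LinearMap.mem_ker.1 hc]
  simp

lemma annihilator_weakCycleRing_le_Hgroup [Finite V] [Fintype E] :
    G.weakCycleRing.annihilator A ≤ G.Hgroup A := by
  classical
  exact fun _ hf => balancedE_iff.2 fun c hc => hf c (cycleSpace_le_weakCycleRing hc)

end TorsionCoboundary

section Splitting

variable {V E A : Type*} [Finite V] [Fintype E] [AddCommGroup A]
  {G : Multigraph V E} {f : E → A} {g : V → torsion2 A}

lemma eq_zero_of_torsionCoboundary_mem_annihilator
    (hg : ∀ v, (G.smallCutRing 3).IsPivot v → g v = 0)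
    (hmem : G.torsionCoboundary A g ∈ G.weakCycleRing.annihilator A) : g = 0 := by
  classical
  cases nonempty_fintype V
  ext v : 1
  let r := (G.smallCutRing 3).rep v
  have hr : (G.smallCutRing 3).IsPivot r :=
    SetRing.isPivot_rep (SetRing.atom_mem (one_mem_smallCutRing three_ne_zero) rfl)
  have hkConn : G.KConn 3 r v := indist_smallCutRing_iff_kConn.1 (SetRing.indist_rep v)
  rcases hkConn with hrv | ⟨p, hp, hdisj⟩
  · exact hg v (hrv ▸ hr)
  · have hb := (hp 0).boundary_eps
    have hzero := hmem _ (mem_weakCycleRing_of_kConn (.inr ⟨p, hp, hdisj⟩) hb)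
    simpa [fSum_torsionCoboundary, hb, add_smul, Finset.sum_add_distrib, sum_vert_smul, hg r hr]
      using hzero

/-- Since `fSum f` is linear on `G.weakCycleRing` with values in `A₂` and vanishes on the cycles, it
factors through the boundary. -/
lemma exists_fSum_torsionCoboundary_eq (hf : G.BalancedE f) :
    ∃ g : V → torsion2 A, ∀ c ∈ G.weakCycleRing, fSum (G.torsionCoboundary A g) c = fSum f c := by
  classical
  cases nonempty_fintype V
  let sum : G.weakCycleRing →+ torsion2 A :=
    { toFun := fun c => ⟨fSum f c, two_nsmul_fSum_eq_zero hf c.2⟩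
      map_zero' := Subtype.ext (fSum_zero f)
      map_add' := fun c d => Subtype.ext (fSum_add_of_mem_weakCycleRing hf c.2 d.2) }
  obtain ⟨χ, hχ⟩ := exists_linearMap_apply_eq (ψ := sum.toZModLinearMap 2)
    (φ := G.boundary.domRestrict G.weakCycleRing.toSubmodule)
    fun c hc => Subtype.ext (balancedE_iff.1 hf c hc)
  refine ⟨fun v => χ (Pi.single v 1), fun c hc => ?_⟩
  have hsum : ∑ v, G.boundary c v • χ (Pi.single v 1) = χ (G.boundary c) := by
    conv_rhs => rw [pi_eq_sum_univ' (G.boundary c)]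
    simp only [map_sum, map_smul]
  rw [fSum_torsionCoboundary, hsum]
  exact congrArg Subtype.val (hχ ⟨c, hc⟩)

lemma fSum_torsionCoboundary_comp_rep {c : E → ZMod 2} (hc : c ∈ G.weakCycleRing)
    (g : V → torsion2 A) : fSum (G.torsionCoboundary A (g ∘ (G.smallCutRing 3).rep)) c = 0 := by
  classical
  cases nonempty_fintype V
  have horth : ∀ h ∈ G.smallCutRing 3, G.boundary c ⬝ᵥ h = 0 := fun h hh => by
    rw [dotProduct_boundary, mem_weakCycleRing_iff.1 hc h hh]
  rw [fSum_torsionCoboundary]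
  exact congrArg Subtype.val
    (SetRing.sum_smul_comp_rep_eq_zero (one_mem_smallCutRing three_ne_zero) horth g)

lemma exists_sub_torsionCoboundary_mem_annihilator (hf : G.BalancedE f) :
    ∃ g : V → torsion2 A, (∀ v, (G.smallCutRing 3).IsPivot v → g v = 0) ∧
      f - G.torsionCoboundary A g ∈ G.weakCycleRing.annihilator A := by
  obtain ⟨g, hg⟩ := exists_fSum_torsionCoboundary_eq hf
  refine ⟨g - g ∘ (G.smallCutRing 3).rep, fun v hv => ?_, fun c hc => ?_⟩
  · rw [Pi.sub_apply, Function.comp_apply, hv.1, sub_self]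
  · rw [map_sub, sub_sub_eq_add_sub, add_sub_right_comm, sub_eq_add_neg, fSum_add_left,
      fSum_add_left, fSum_neg_left, hg c hc, fSum_torsionCoboundary_comp_rep hc, add_neg_cancel,
      add_zero]

variable (G A) in
/-- The direct sum decomposition of the balanced functions: those that sum to zero over every
`3`-weak cycle, and the coboundaries of the `A₂`-valued vertex functions that vanish on the chosen
representatives of the `3`-edge-connected classes. -/
noncomputable def splitting : G.weakCycleRing.annihilator A ×
    ({v // ¬ (G.smallCutRing 3).IsPivot v} → torsion2 A) →+ G.Hgroup A :=
  (AddSubgroup.inclusion annihilator_weakCycleRing_le_Hgroup).coprod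
    (((G.torsionCoboundary A).codRestrict (G.Hgroup A) torsionCoboundary_mem_Hgroup).comp
      (Function.ExtendByZero.hom (torsion2 A) Subtype.val))

lemma coe_splitting_mk (f : G.weakCycleRing.annihilator A)
    (u : {v // ¬ (G.smallCutRing 3).IsPivot v} → torsion2 A) :
    (G.splitting A (f, u) : E → A) =
      f + G.torsionCoboundary A (Function.extend Subtype.val u 0) :=
  rfl

lemma splitting_injective : Function.Injective (G.splitting A) := by
  refine (injective_iff_map_eq_zero _).2 fun ⟨f, u⟩ h => ?_
  have hsum := (coe_splitting_mk f u).symm.trans (congrArg Subtype.val h)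
  have hext : Function.extend Subtype.val u 0 = 0 := by
    refine eq_zero_of_torsionCoboundary_mem_annihilator (G := G) (fun v hv => ?_) ?_
    · exact Function.extend_apply' _ _ _ fun ⟨w, hw⟩ => w.2 (hw ▸ hv)
    · rw [← neg_eq_of_add_eq_zero_right hsum]
      exact neg_mem f.2
  have hu : u = 0 := funext fun v => by
    rw [← Subtype.val_injective.extend_apply u 0 v, hext, Pi.zero_apply, Pi.zero_apply]
  rw [hext, map_zero, add_zero] at hsum
  exact Prod.ext (Subtype.ext hsum) hu

lemma splitting_surjective : Function.Surjective (G.splitting A) := by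
  rintro ⟨f, hf⟩
  obtain ⟨g, hg, hmem⟩ := exists_sub_torsionCoboundary_mem_annihilator hf
  have hext : Function.extend Subtype.val
      (fun v : {v // ¬ (G.smallCutRing 3).IsPivot v} => g v) 0 = g := by
    ext v : 1
    by_cases hv : (G.smallCutRing 3).IsPivot v
    · rw [Function.extend_apply' _ _ _ fun ⟨w, hw⟩ => w.2 (hw ▸ hv), hg v hv, Pi.zero_apply]
    · exact Subtype.val_injective.extend_apply _ _ ⟨v, hv⟩
  refine ⟨(⟨f - G.torsionCoboundary A g, hmem⟩, fun v => g v), Subtype.ext ?_⟩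
  rw [coe_splitting_mk, hext, sub_add_cancel]

end Splitting

theorem stmt11 (G : Multigraph V E) (A : Type*) [AddCommGroup A] :
    Nonempty ((G.Hgroup A) ≃+
      ((Fin (G.conk 3 - G.con) → A) ×
        (Fin (Fintype.card V - G.conk 3) → torsion2 A))) := by
  let edges : {e // ¬ G.weakCycleRing.IsPivot e} ≃ Fin (G.conk 3 - G.con) :=
    Finite.equivFinOfCardEq card_not_isPivot_weakCycleRing
  let vertices : {v // ¬ (G.smallCutRing 3).IsPivot v} ≃ Fin (Fintype.card V - G.conk 3) :=
    Finite.equivFinOfCardEq (card_not_isPivot_smallCutRing three_ne_zero)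
  let split := AddEquiv.ofBijective (G.splitting A) ⟨splitting_injective, splitting_surjective⟩
  let annihilator := SetRing.annihilatorEquiv G.weakCycleRing A
  exact ⟨split.symm.trans
    ((annihilator.trans (AddEquiv.arrowCongr edges (.refl A))).prodCongr
      (AddEquiv.arrowCongr vertices (.refl _)))⟩

end Multigraph
end

section
/- Let G be a finite undirected multigraph and A an Abelian group. If a function g:V→A is balanceable, then for any two 3-edge-connected vertices v and w of G, the element g(v)−g(w) belongs to 2A, the image of the doubling map a↦2a on A. -/
open Finset

namespace Multigraph

variable {V E : Type*} [Fintype V] [Fintype E] [DecidableEq V] [DecidableEq E]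

/-!
Following one ttrail from `x` to `y` and returning along another, edge-disjoint one gives a closed
ttrail. Reversing a ttrail trades its initial vertex for its final one, so the vanishing of the sum
along the closed ttrail says that the two path sums add up to `g x - g y`. For three pairwise
edge-disjoint ttrails, comparing these equations shows that the path sums coincide, so twice their
common value is `g x - g y`.
-/

section

variable {V E : Type*} {G : Multigraph V E} {x y z : V} {p q r : List (V × E)}

theorem IsChain.append (hp : G.IsChain x y p) (hq : G.IsChain y z q) :
    G.IsChain x z (p ++ q) := by
  induction p generalizing x with
  | nil => cases hp; exact hq
  | cons _ _ ih =>
    obtain ⟨rfl, u, hu, hp⟩ := hp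
    exact ⟨rfl, u, hu, ih hp⟩

theorem IsChain.head?_elim_fst (hp : G.IsChain x y p) : p.head?.elim y Prod.fst = x := by
  cases p with
  | nil => exact Eq.symm hp
  | cons => exact hp.1

theorem IsTtrail.append (hp : G.IsTtrail x y p) (hq : G.IsTtrail y z q)
    (hpq : EdgeDisjoint p q) : G.IsTtrail x z (p ++ q) := by
  refine ⟨hp.1.append hq.1, ?_⟩
  rw [List.map_append]
  exact hp.2.append hq.2 hpq

/-- The reversal `y, eₙ, vₙ, …, e₂, v₂, e₁` of a ttrail `v₁, e₁, …, vₙ, eₙ` that ends in `y`. The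
final vertex `y` is an argument because the encoding of ttrails omits it. -/
def ttrailReverse (y : V) : List (V × E) → List (V × E)
  | [] => []
  | (_, e) :: p => ttrailReverse y p ++ [(p.head?.elim y Prod.fst, e)]

theorem map_snd_ttrailReverse (y : V) (p : List (V × E)) :
    (ttrailReverse y p).map Prod.snd = (p.map Prod.snd).reverse := by
  induction p with
  | nil => rfl
  | cons _ _ ih => simp [ttrailReverse, ih]

theorem IsChain.reverse (hp : G.IsChain x y p) :
    G.IsChain y x (ttrailReverse y p) := by
  induction p generalizing x with
  | nil => exact Eq.symm hp
  | cons _ _ ih =>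
    obtain ⟨rfl, u, hu, hp⟩ := hp
    exact (ih hp).append ⟨hp.head?_elim_fst, _, hu.trans Sym2.eq_swap, rfl⟩

theorem IsTtrail.reverse (hp : G.IsTtrail x y p) :
    G.IsTtrail y x (ttrailReverse y p) := by
  refine ⟨hp.1.reverse, ?_⟩
  rw [map_snd_ttrailReverse]
  exact List.nodup_reverse.2 hp.2

theorem EdgeDisjoint.reverse_right (hpq : EdgeDisjoint p q) (y : V) :
    EdgeDisjoint p (ttrailReverse y q) := by
  intro e he
  rw [map_snd_ttrailReverse, List.mem_reverse]
  exact hpq e he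

variable {A : Type*} [AddCommGroup A] {g : V → A} {f : E → A}

theorem pathSum_append (g : V → A) (f : E → A) (p q : List (V × E)) :
    pathSum g f (p ++ q) = pathSum g f p + pathSum g f q := by
  simp [pathSum]

theorem IsChain.pathSum_ttrailReverse_add (hp : G.IsChain x y p) (g : V → A) (f : E → A) :
    pathSum g f (ttrailReverse y p) + g x = pathSum g f p + g y := by
  induction p generalizing x with
  | nil => cases hp; rfl
  | cons a p ih =>
    obtain ⟨v, e⟩ := a
    obtain ⟨rfl, u, -, hp⟩ := hp
    calc pathSum g f (ttrailReverse y ((v, e) :: p)) + g v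
        = (pathSum g f (ttrailReverse y p) + g u) + f e + g v := by
          simp [ttrailReverse, pathSum, hp.head?_elim_fst, add_assoc]
      _ = (pathSum g f p + g y) + f e + g v := by rw [ih hp]
      _ = pathSum g f ((v, e) :: p) + g y := by rw [pathSum_cons]; abel

/-- The edge function `f` balances the vertex function `g`: their joint sum vanishes along every
closed ttrail. Thus `g` is `Balanceable` when some `f` balances it. -/
def Balances (G : Multigraph V E) (f : E → A) (g : V → A) : Prop :=
  ∀ x p, G.IsTtrail x x p → pathSum g f p = 0

theorem Balances.pathSum_add_pathSum (hf : G.Balances f g) (hp : G.IsTtrail x y p)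
    (hq : G.IsTtrail x y q) (hpq : EdgeDisjoint p q) :
    pathSum g f p + pathSum g f q = g x - g y := by
  have sum_closed : pathSum g f p + pathSum g f (ttrailReverse y q) = 0 := by
    rw [← pathSum_append]
    exact hf x _ (hp.append hq.reverse (hpq.reverse_right y))
  calc pathSum g f p + pathSum g f q
      = pathSum g f p + (pathSum g f q + g y) - g y := by abel
    _ = (pathSum g f p + pathSum g f (ttrailReverse y q)) + g x - g y := by
        rw [← hq.1.pathSum_ttrailReverse_add g f, add_assoc]
    _ = g x - g y := by rw [sum_closed, zero_add]

theorem Balances.two_nsmul_pathSum (hf : G.Balances f g) (hp : G.IsTtrail x y p)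
    (hq : G.IsTtrail x y q) (hr : G.IsTtrail x y r) (hpq : EdgeDisjoint p q)
    (hpr : EdgeDisjoint p r) (hqr : EdgeDisjoint q r) :
    2 • pathSum g f p = g x - g y := by
  have sum_pq := hf.pathSum_add_pathSum hp hq hpq
  have sum_pr := hf.pathSum_add_pathSum hp hr hpr
  have sum_qr := hf.pathSum_add_pathSum hq hr hqr
  have p_eq_q : pathSum g f p = pathSum g f q := add_right_cancel (sum_pr.trans sum_qr.symm)
  rw [two_nsmul, ← sum_pq, ← p_eq_q]

theorem stmt12_general (G : Multigraph V E) (g : V → A) (hg : G.Balanceable g) (v w : V)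
    (hvw : G.KConn 3 v w) : g v - g w ∈ double2 A := by
  obtain ⟨f, hf : G.Balances f g⟩ := hg
  rcases hvw with rfl | ⟨p, hp, hdisj⟩
  · rw [sub_self]
    exact zero_mem _
  · have two_nsmul_eq : 2 • pathSum g f (p 0) = g v - g w :=
      hf.two_nsmul_pathSum (hp 0) (hp 1) (hp 2) (hdisj 0 1 (by decide))
        (hdisj 0 2 (by decide)) (hdisj 1 2 (by decide))
    exact ⟨pathSum g f (p 0), two_nsmul_eq.symm⟩

end

theorem stmt12 (G : Multigraph V E) {A : Type*} [AddCommGroup A] (g : V → A)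
    (hg : G.Balanceable g) (v w : V) (hvw : G.KConn 3 v w) :
    g v - g w ∈ double2 A :=
  stmt12_general G g hg v w hvw

end Multigraph
end

section
/- Let G be a finite undirected multigraph and A an Abelian group. For any vertex v of G and any a∈A, the function g:V→A defined by g(v)=2a and g(w)=0 for all vertices w≠v is balanceable. -/
open Finset

namespace Multigraph

variable {V E : Type*} [Fintype V] [Fintype E] [DecidableEq V] [DecidableEq E]

section General

omit [Fintype V] [Fintype E] [DecidableEq V] [DecidableEq E]

/-- The edge function sending `e` to `h x + h y`, where `x` and `y` are the endpoints of `e`; a loop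
at `x` is sent to `h x + h x`. Its negative balances `2 • h`. -/
def endpointSum {M : Type*} [AddCommMagma M] (G : Multigraph V E) (h : V → M) (e : E) : M :=
  ((G.ends e).map h).add

lemma endpointSum_of_ends_eq {M : Type*} [AddCommMagma M] {G : Multigraph V E} {e : E} {x y : V}
    (he : G.ends e = s(x, y)) (h : V → M) : G.endpointSum h e = h x + h y := by
  rw [endpointSum, he, Sym2.map_mk, Sym2.add_mk]

variable {A : Type*} [AddCommGroup A]

lemma IsChain.pathSum_two_nsmul_neg_endpointSum {G : Multigraph V E} {x y : V}
    {p : List (V × E)} (hp : G.IsChain x y p) (h : V → A) :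
    pathSum (2 • h) (-G.endpointSum h) p = h x - h y := by
  induction p generalizing x with
  | nil =>
    obtain rfl : x = y := hp
    rw [sub_self, pathSum, List.map_nil, List.sum_nil]
  | cons ve t ih =>
    obtain ⟨u, e⟩ := ve
    obtain ⟨rfl, w, he, ht⟩ := hp
    calc pathSum (2 • h) (-G.endpointSum h) ((u, e) :: t)
        = (2 • h u - G.endpointSum h e) + pathSum (2 • h) (-G.endpointSum h) t := by
          rw [pathSum_cons, Pi.smul_apply, Pi.neg_apply, ← sub_eq_add_neg]
      _ = (2 • h u - (h u + h w)) + (h w - h y) := by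
          rw [endpointSum_of_ends_eq he, ih ht]
      _ = h u - h y := by abel

theorem stmt13_general (G : Multigraph V E) (h : V → A) : G.Balanceable (2 • h) :=
  ⟨-G.endpointSum h, fun _ _ hp => by
    rw [hp.1.pathSum_two_nsmul_neg_endpointSum, sub_self]⟩

end General

theorem stmt13 (G : Multigraph V E) {A : Type*} [AddCommGroup A] (v : V) (a : A) :
    G.Balanceable (fun w => if w = v then 2 • a else 0) := by
  convert G.stmt13_general (Pi.single v a) using 1
  simp only [← Pi.single_smul, funext_iff, Pi.single_apply, implies_true]

end Multigraph
end
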